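/- arXiv:1502.06875 — 2 statements merged into one kernel-verified Lean document; each statement's English description precedes it below -/
import Mathlib

section
/- Let ⟨V,E,d⟩ be a multi-weighted game graph and v₀ a vertex. If Player 1 wins the bounding game Γ⟨V,E,d⟩ from v₀, then she has a winning strategy from v₀ which ensures ‖ρ‖ ≤ (4|V|·‖E‖)^{2(d+2)³} for all consistent plays ρ from v₀ (the small hypercube property). -/
/-! Multi-weighted game graphs, plays, strategies, energy and bounding games. -/

/-- A configuration: a vertex together with an accumulated weight vector. -/
abbrev Conf (V : Type) (d : ℕ) := V × (Fin d → ℤ)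

/-- A multi-weighted game graph: Player-1 vertices, a finite set of
weighted edges, such that every vertex has an outgoing edge. -/
structure MWG (V : Type) [Fintype V] [DecidableEq V] (d : ℕ) where
  P1 : Finset V
  E : Set (V × (Fin d → ℤ) × V)
  finE : E.Finite
  serial : ∀ v : V, ∃ u v', (v, u, v') ∈ E

variable {V : Type} [Fintype V] [DecidableEq V] {d : ℕ}

/-- The norm of an integer vector: max of absolute values of entries. -/
def vnorm {d : ℕ} (u : Fin d → ℤ) : ℕ := Finset.univ.sup fun i => (u i).natAbs

/-- `‖E‖`: the maximal norm of an edge label. -/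
noncomputable def enorm (G : MWG V d) : ℕ := G.finE.toFinset.sup fun e => vnorm e.2.1

/-- One step along an edge of the graph. -/
def Step (G : MWG V d) (c c' : Conf V d) : Prop := (c.1, c'.2 - c.2, c'.1) ∈ G.E

/-- A finite path, as a list of configurations. -/
def IsPathL (G : MWG V d) (π : List (Conf V d)) : Prop := π.Chain' (Step G)

/-- An infinite play from `v₀`, starting with weight `0`. -/
def IsPlay (G : MWG V d) (v₀ : V) (ρ : ℕ → Conf V d) : Prop :=
  ρ 0 = (v₀, 0) ∧ ∀ n, Step G (ρ n) (ρ (n+1))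

/-- A strategy: given the history (past configurations) and the current
configuration, choose a weighted move. -/
abbrev Strat (V : Type) (d : ℕ) := List (Conf V d) → Conf V d → (Fin d → ℤ) × V

/-- A valid strategy for the player owning the vertices in `P` always
chooses an edge of the game graph from the current vertex. -/
def ValidStrat (G : MWG V d) (P : Set V) (σ : Strat V d) : Prop :=
  ∀ h c, IsPathL G (h ++ [c]) → c.1 ∈ P → (c.1, (σ h c).1, (σ h c).2) ∈ G.E

/-- The history of a play before instant `n`. -/
def hist (ρ : ℕ → Conf V d) (n : ℕ) : List (Conf V d) := (List.range n).map ρ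

/-- A play is consistent with strategy `σ` of the player owning `P` if at
every configuration with vertex in `P` the next configuration is obtained
by playing the edge prescribed by `σ`. -/
def Consistent (P : Set V) (σ : Strat V d) (ρ : ℕ → Conf V d) : Prop :=
  ∀ n, (ρ n).1 ∈ P →
    ρ (n+1) = ((σ (hist ρ n) (ρ n)).2, (ρ n).2 + (σ (hist ρ n) (ρ n)).1)

/-- Player owning `P` wins the game with payoff `Win` from `v₀`. -/
def Wins (G : MWG V d) (P : Set V) (Win : (ℕ → Conf V d) → Prop) (v₀ : V) : Prop :=
  ∃ σ : Strat V d, ValidStrat G P σ ∧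
    ∀ ρ, IsPlay G v₀ ρ → Consistent P σ ρ → Win ρ

/-- Player 1's winning condition in the energy game with initial credit `b`. -/
def EnergyOK (b : Fin d → ℕ) (ρ : ℕ → Conf V d) : Prop :=
  ∀ n i, 0 ≤ (b i : ℤ) + (ρ n).2 i

/-- Player 1's winning condition in the bounding game: the norms of the
total weights of all the finite prefixes are bounded. -/
def BoundedPlay (ρ : ℕ → Conf V d) : Prop :=
  ∃ B : ℕ, ∀ n, vnorm ((ρ n).2) ≤ B

def P1WinsEnergy (G : MWG V d) (b : Fin d → ℕ) (v₀ : V) : Prop :=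
  Wins G (G.P1 : Set V) (EnergyOK b) v₀

def P2WinsEnergy (G : MWG V d) (b : Fin d → ℕ) (v₀ : V) : Prop :=
  Wins G {v | v ∉ G.P1} (fun ρ => ¬ EnergyOK b ρ) v₀

def P1WinsBounding (G : MWG V d) (v₀ : V) : Prop :=
  Wins G (G.P1 : Set V) BoundedPlay v₀

def P2WinsBounding (G : MWG V d) (v₀ : V) : Prop :=
  Wins G {v | v ∉ G.P1} (fun ρ => ¬ BoundedPlay ρ) v₀

/-- The negative unit vector `-e i`. -/
def negUnit (d : ℕ) (i : Fin d) : Fin d → ℤ := fun j => if j = i then -1 else 0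

/-- The lossy game graph: add a self-loop labelled `-e i` at each Player-1
vertex, for every coordinate `i`. -/
def lossy (G : MWG V d) : MWG V d where
  P1 := G.P1
  E := G.E ∪ (fun p : V × Fin d => (p.1, negUnit d p.2, p.1)) '' {p | p.1 ∈ G.P1}
  finE := G.finE.union ((Set.toFinite _).image _)
  serial := fun v => by
    obtain ⟨u, v', h⟩ := G.serial v
    exact ⟨u, v', Set.mem_union_left _ h⟩

/-- Every cycle of the game graph contains at least one Player-1 vertex. -/
def EveryCycleHasP1 (G : MWG V d) : Prop :=
  ∀ (n : ℕ) (c : ℕ → Conf V d), 0 < n → (∀ j < n, Step G (c j) (c (j+1))) →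
    (c 0).1 = (c n).1 → ∃ j < n, (c j).1 ∈ G.P1

/-!
Player 1 wins from `v₀` if and only if some finite set `S` of configurations that she can avoid
leaving meets `{v₀} × ℤ^d`; the weights in `S` need not be small. In every linear order of the
weights, an edge that stays in `S` and starts at a maximal point of `S` above its source is, along
cycles, nonincreasing. She therefore plays edges from the points of `S` that are lexicographically
maximal for a list of functionals, and chooses this list according to the current weight `a`.

The list consists of the functionals `r` for which `a` comes close to the facet of direction `r` of
an `N`-fold zonotope, spanned by all the weights that simple cycles may have. If all of them are
close, then no two have strictly opposite signs on a cycle, and so the lexicographic order makes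
each of them separately nonincreasing along cycles. Elements of the list are ordered by seniority:
`r` loses at most the weight of a simple path as long as the functionals in front of it are the
same, and this prefix can only shrink. Hence each `r` suffers boundedly many losses, and the weight
never leaves the zonotope. Siegel's lemma bounds the facet directions, hence `N`.
-/

open Matrix

section Norms

variable {u u' : Fin d → ℤ} {m m' : ℕ}

theorem vnorm_le_iff : vnorm u ≤ m ↔ ∀ i, |u i| ≤ m := by
  simp only [vnorm, Finset.sup_le_iff, Finset.mem_univ, true_imp_iff, Int.abs_eq_natAbs,
    Nat.cast_le]

theorem abs_le_vnorm (u : Fin d → ℤ) (i : Fin d) : |u i| ≤ vnorm u :=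
  vnorm_le_iff.1 le_rfl i

theorem vnorm_neg (u : Fin d → ℤ) : vnorm (-u) = vnorm u := by
  simp only [vnorm, Pi.neg_apply, Int.natAbs_neg]

theorem vnorm_add_le (u u' : Fin d → ℤ) : vnorm (u + u') ≤ vnorm u + vnorm u' := by
  refine vnorm_le_iff.2 fun i => (abs_add_le _ _).trans ?_
  push_cast
  exact add_le_add (abs_le_vnorm u i) (abs_le_vnorm u' i)

theorem abs_dotProduct_le (hu : vnorm u ≤ m) (hu' : vnorm u' ≤ m') :
    |u ⬝ᵥ u'| ≤ (d * m * m' : ℕ) :=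
  calc |u ⬝ᵥ u'| ≤ ∑ i, |u i * u' i| := Finset.abs_sum_le_sum_abs _ _
    _ ≤ ∑ _i : Fin d, (m * m' : ℤ) := by
      refine Finset.sum_le_sum fun i _ => ?_
      rw [abs_mul]
      exact mul_le_mul (vnorm_le_iff.1 hu i) (vnorm_le_iff.1 hu' i) (abs_nonneg _) (by positivity)
    _ = (d * m * m' : ℕ) := by simp [mul_assoc]

theorem vnorm_single (i : Fin d) (z : ℤ) : vnorm (Pi.single i z : Fin d → ℤ) = z.natAbs := by
  refine le_antisymm (vnorm_le_iff.2 fun j => ?_) ?_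
  · obtain rfl | hj := eq_or_ne j i
    · simp
    · simp [hj]
  · have := abs_le_vnorm (Pi.single i z : Fin d → ℤ) i
    rw [Pi.single_eq_same, ← Int.natCast_natAbs] at this
    exact_mod_cast this

/-- The integer points of the hypercube of radius `m` centred at the origin. -/
noncomputable def cube (d m : ℕ) : Finset (Fin d → ℤ) :=
  Finset.Icc (fun _ => -(m : ℤ)) (fun _ => (m : ℤ))

theorem mem_cube : u ∈ cube d m ↔ vnorm u ≤ m := by
  simp only [cube, Finset.mem_Icc, Pi.le_def, vnorm_le_iff, abs_le, forall_and]

theorem card_cube (d m : ℕ) : (cube d m).card = (2 * m + 1) ^ d := by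
  simp only [cube, Pi.card_Icc, Int.card_Icc, Finset.prod_const, Finset.card_univ,
    Fintype.card_fin]
  congr 1
  omega

end Norms

section Conformality

/-- `SignConformal C s r`: at every point of `C`, the functional `r` vanishes or has the sign of
the functional `s`. -/
def SignConformal {ι : Type*} [Fintype ι] (C : Finset (ι → ℤ)) (s r : ι → ℤ) : Prop :=
  ∀ c ∈ C, r ⬝ᵥ c = 0 ∨ 0 < (s ⬝ᵥ c) * (r ⬝ᵥ c)

/-- The points of `C` at which the functional `s` does not vanish. -/
def supportOn {ι : Type*} [Fintype ι] (C : Finset (ι → ℤ)) (s : ι → ℤ) : Finset (ι → ℤ) :=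
  C.filter (s ⬝ᵥ · ≠ 0)

/-- The combination of `s` and `x` that vanishes at `c`, normalised so that the coefficient of `s`
is a square. -/
def eliminate {ι : Type*} [Fintype ι] (s x c : ι → ℤ) : ι → ℤ :=
  (x ⬝ᵥ c) ^ 2 • s - ((s ⬝ᵥ c) * (x ⬝ᵥ c)) • x

variable {ι : Type*} [Fintype ι] {C R : Finset (ι → ℤ)} {s s' r r' x c c₀ : ι → ℤ}

theorem SignConformal.trans (h : SignConformal C s s') (h' : SignConformal C s' r) :
    SignConformal C s r := by
  intro c hc
  rcases h' c hc with h0 | h0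
  · exact Or.inl h0
  · rcases h c hc with h1 | h1
    · simp only [h1, zero_mul, lt_irrefl] at h0
    · right
      have := mul_pos h1 h0
      nlinarith [sq_nonneg (s' ⬝ᵥ c)]

theorem SignConformal.mul_nonneg (h : SignConformal C s r) (hc : c ∈ C) :
    0 ≤ (s ⬝ᵥ c) * (r ⬝ᵥ c) := by
  rcases h c hc with h | h
  · simp [h]
  · exact h.le

theorem SignConformal.mul_nonneg_of_common (h : SignConformal C s r) (h' : SignConformal C s r')
    (hc : c ∈ C) : 0 ≤ (r ⬝ᵥ c) * (r' ⬝ᵥ c) := by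
  rcases h c hc with h0 | h0
  · simp [h0]
  · have hs : s ⬝ᵥ c ≠ 0 := left_ne_zero_of_mul h0.ne'
    refine (mul_nonneg_iff_of_pos_left (sq_pos_of_ne_zero hs)).1 ?_
    calc 0 ≤ (s ⬝ᵥ c) * (r ⬝ᵥ c) * ((s ⬝ᵥ c) * (r' ⬝ᵥ c)) := Int.mul_nonneg h0.le (h'.mul_nonneg hc)
      _ = (s ⬝ᵥ c) ^ 2 * ((r ⬝ᵥ c) * (r' ⬝ᵥ c)) := by ring

theorem SignConformal.supportOn_subset (h : SignConformal C s r) :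
    supportOn C r ⊆ supportOn C s := by
  intro c hc
  obtain ⟨hcC, hrc⟩ := Finset.mem_filter.1 hc
  refine Finset.mem_filter.2 ⟨hcC, fun hsc => ?_⟩
  have := (h c hcC).resolve_left hrc
  simp only [hsc, zero_mul, lt_irrefl] at this

theorem eliminate_dotProduct (s x c₀ c : ι → ℤ) : eliminate s x c₀ ⬝ᵥ c =
    (x ⬝ᵥ c₀) * ((x ⬝ᵥ c₀) * (s ⬝ᵥ c) - (s ⬝ᵥ c₀) * (x ⬝ᵥ c)) := by
  simp only [eliminate, sub_dotProduct, smul_dotProduct, smul_eq_mul]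
  ring

theorem sq_smul_eq_eliminate_add (s x c : ι → ℤ) :
    (x ⬝ᵥ c) ^ 2 • s = eliminate s x c + ((s ⬝ᵥ c) * (x ⬝ᵥ c)) • x :=
  (sub_add_cancel _ _).symm

theorem exists_min_ratio (hx : ∃ c ∈ C, x ⬝ᵥ c ≠ 0) :
    ∃ c₀ ∈ C, x ⬝ᵥ c₀ ≠ 0 ∧ ∀ c ∈ C, |s ⬝ᵥ c₀| * |x ⬝ᵥ c| ≤ |s ⬝ᵥ c| * |x ⬝ᵥ c₀| := by
  obtain ⟨c₁, hc₁, hxc₁⟩ := hx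
  obtain ⟨c₀, hc₀, hmin⟩ := (supportOn C x).exists_min_image
    (fun c => ((|s ⬝ᵥ c| : ℤ) / (|x ⬝ᵥ c| : ℤ) : ℚ)) ⟨c₁, Finset.mem_filter.2 ⟨hc₁, hxc₁⟩⟩
  obtain ⟨hc₀C, hxc₀⟩ := Finset.mem_filter.1 hc₀
  refine ⟨c₀, hc₀C, hxc₀, fun c hc => ?_⟩
  by_cases hxc : x ⬝ᵥ c = 0
  · rw [hxc, abs_zero, mul_zero]
    positivity
  · have := hmin c (Finset.mem_filter.2 ⟨hc, hxc⟩)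
    rw [div_le_div_iff₀ (by positivity) (by positivity)] at this
    exact_mod_cast this

theorem exists_signConformal_eliminate (hvan : ∀ c ∈ C, s ⬝ᵥ c = 0 → x ⬝ᵥ c = 0)
    (hx : ∃ c ∈ C, x ⬝ᵥ c ≠ 0) :
    ∃ c₀ ∈ C, x ⬝ᵥ c₀ ≠ 0 ∧ s ⬝ᵥ c₀ ≠ 0 ∧ SignConformal C s (eliminate s x c₀) := by
  obtain ⟨c₀, hc₀, hxc₀, hmin⟩ := exists_min_ratio (s := s) hx
  refine ⟨c₀, hc₀, hxc₀, mt (hvan c₀ hc₀) hxc₀, fun c hc => or_iff_not_imp_left.2 fun hne => ?_⟩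
  have hsc : s ⬝ᵥ c ≠ 0 := fun h => hne (by simp [eliminate_dotProduct, h, hvan c hc h])
  refine lt_of_le_of_ne ?_ (mul_ne_zero hsc hne).symm
  calc 0 ≤ |x ⬝ᵥ c₀| * |s ⬝ᵥ c| * (|s ⬝ᵥ c| * |x ⬝ᵥ c₀| - |s ⬝ᵥ c₀| * |x ⬝ᵥ c|) :=
        mul_nonneg (by positivity) (sub_nonneg.2 (hmin c hc))
    _ = (x ⬝ᵥ c₀) ^ 2 * (s ⬝ᵥ c) ^ 2 - |(x ⬝ᵥ c₀) * (s ⬝ᵥ c) * ((s ⬝ᵥ c₀) * (x ⬝ᵥ c))| := by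
        simp only [abs_mul, ← sq_abs (x ⬝ᵥ c₀), ← sq_abs (s ⬝ᵥ c)]
        ring
    _ ≤ (x ⬝ᵥ c₀) ^ 2 * (s ⬝ᵥ c) ^ 2 - (x ⬝ᵥ c₀) * (s ⬝ᵥ c) * ((s ⬝ᵥ c₀) * (x ⬝ᵥ c)) :=
        sub_le_sub_left (le_abs_self _) _
    _ = (s ⬝ᵥ c) * (eliminate s x c₀ ⬝ᵥ c) := by
        rw [eliminate_dotProduct]
        ring

theorem SignConformal.card_supportOn_eliminate_lt (h : SignConformal C s (eliminate s x c₀))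
    (hc₀ : c₀ ∈ C) (hs : s ⬝ᵥ c₀ ≠ 0) :
    (supportOn C (eliminate s x c₀)).card < (supportOn C s).card := by
  refine Finset.card_lt_card (Finset.ssubset_iff_subset_ne.2 ⟨h.supportOn_subset, fun heq => ?_⟩)
  have hmem : c₀ ∈ supportOn C (eliminate s x c₀) := heq ▸ Finset.mem_filter.2 ⟨hc₀, hs⟩
  exact (Finset.mem_filter.1 hmem).2 (by rw [eliminate_dotProduct]; ring)

theorem signConformal_of_smul_eq {p q : ℤ} (hp : 0 < p) (hq : 0 < q) (h : p • s = q • r) :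
    SignConformal C s r := by
  intro c _
  have hc : p * (s ⬝ᵥ c) = q * (r ⬝ᵥ c) := by
    simpa only [smul_dotProduct, smul_eq_mul] using congrArg (· ⬝ᵥ c) h
  refine or_iff_not_imp_left.2 fun hne => pos_of_mul_pos_right (a := p) ?_ hp.le
  rw [← mul_assoc, hc, mul_assoc]
  exact mul_pos hq (mul_self_pos.2 hne)

/-- The elementary vectors of a symmetric set `R` of functionals suffice: repeatedly eliminating
them shrinks the support of `s` until nothing but a multiple of one of them is left. -/
theorem exists_signConformal_mem (hC : ∀ x : ι → ℤ, x ≠ 0 → ∃ c ∈ C, x ⬝ᵥ c ≠ 0)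
    (hneg : ∀ x ∈ R, -x ∈ R)
    (hR : ∀ s : ι → ℤ, s ≠ 0 → ∃ x ∈ R, x ≠ 0 ∧ ∀ c ∈ C, s ⬝ᵥ c = 0 → x ⬝ᵥ c = 0) (hs : s ≠ 0) :
    ∃ r ∈ R, r ≠ 0 ∧ SignConformal C s r := by
  induction hn : (supportOn C s).card using Nat.strong_induction_on generalizing s with
  | _ n ih =>
  obtain ⟨x, hxR, hx0, hvan⟩ := hR s hs
  obtain ⟨c₀, hc₀, hxc₀, hsc₀, hconf⟩ := exists_signConformal_eliminate hvan (hC x hx0)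
  have hcomb := sq_smul_eq_eliminate_add s x c₀
  by_cases h0 : eliminate s x c₀ = 0
  · rw [h0, zero_add] at hcomb
    rcases (mul_ne_zero hsc₀ hxc₀).lt_or_gt with hq | hq
    · refine ⟨-x, hneg x hxR, neg_ne_zero.2 hx0,
        signConformal_of_smul_eq (sq_pos_of_ne_zero hxc₀) (neg_pos.2 hq) ?_⟩
      rw [hcomb, neg_smul_neg]
    · exact ⟨x, hxR, hx0, signConformal_of_smul_eq (sq_pos_of_ne_zero hxc₀) hq hcomb⟩
  · obtain ⟨r, hrR, hr0, hr⟩ :=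
      ih _ (hn ▸ hconf.card_supportOn_eliminate_lt hc₀ hsc₀) h0 rfl
    exact ⟨r, hrR, hr0, hconf.trans hr⟩

end Conformality

section Siegel

attribute [local instance] Matrix.seminormedAddCommGroup in
/-- The case of Siegel's lemma with at most `d - 1` equations, where its exponent is at most
`d - 1`. -/
theorem exists_ne_zero_mulVec_eq_zero_vnorm_le {κ : Type*} [Fintype κ] {m : ℕ} (hm : 1 ≤ m)
    (A : Matrix κ (Fin d) ℤ) (hcard : Fintype.card κ < d) (hA : ∀ k j, |A k j| ≤ m) :
    ∃ t : Fin d → ℤ, t ≠ 0 ∧ A *ᵥ t = 0 ∧ vnorm t ≤ (d * m) ^ (d - 1) := by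
  classical
  have hdm : 1 ≤ d * m := Nat.mul_pos (by lia) hm
  rcases isEmpty_or_nonempty κ with hκ | hκ
  · exact ⟨Pi.single ⟨0, by lia⟩ 1, by simp, Subsingleton.elim _ _,
      (vnorm_single _ _).trans_le (Nat.one_le_pow _ _ hdm)⟩
  obtain ⟨t, ht0, hAt, ht⟩ := Int.Matrix.exists_ne_zero_int_vec_norm_le A
    (by rwa [Fintype.card_fin]) Fintype.card_pos
  refine ⟨t, ht0, hAt, vnorm_le_iff.2 fun i => ?_⟩
  rw [Fintype.card_fin] at ht
  have hnorm : ‖A‖ ≤ m := (Matrix.norm_le_iff m.cast_nonneg).2 fun k j => by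
    rw [Int.norm_eq_abs]
    exact_mod_cast hA k j
  have hbase : (d : ℝ) * max 1 ‖A‖ ≤ (d * m : ℕ) := by
    push_cast
    gcongr
    exact max_le (by exact_mod_cast hm) hnorm
  have hgap : (1 : ℝ) ≤ d - Fintype.card κ := by
    rw [le_sub_iff_add_le, add_comm]
    exact_mod_cast hcard
  have hexp : (Fintype.card κ : ℝ) / (d - Fintype.card κ) ≤ (d - 1 : ℕ) :=
    (div_le_self (Nat.cast_nonneg _) hgap).trans (by exact_mod_cast Nat.le_sub_one_of_lt hcard)
  have hbound : ‖t‖ ≤ ((d * m) ^ (d - 1) : ℕ) := by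
    calc ‖t‖ ≤ (d * max 1 ‖A‖) ^ ((Fintype.card κ : ℝ) / (d - Fintype.card κ)) := ht
      _ ≤ ((d * m : ℕ) : ℝ) ^ ((Fintype.card κ : ℝ) / (d - Fintype.card κ)) :=
        Real.rpow_le_rpow (by positivity) hbase (div_nonneg (Nat.cast_nonneg _) (by linarith))
      _ ≤ ((d * m : ℕ) : ℝ) ^ ((d - 1 : ℕ) : ℝ) :=
        Real.rpow_le_rpow_of_exponent_le (by exact_mod_cast hdm) hexp
      _ = ((d * m) ^ (d - 1) : ℕ) := by rw [Real.rpow_natCast, Nat.cast_pow]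
  have hti := (norm_le_pi_norm t i).trans hbound
  rw [Int.norm_eq_abs] at hti
  exact_mod_cast hti

theorem dotProduct_eq_zero_of_mem_span {ι K : Type*} [Fintype ι] [CommRing K] {A : Set (ι → K)}
    {x c : ι → K} (hx : ∀ c ∈ A, x ⬝ᵥ c = 0) (hc : c ∈ Submodule.span K A) : x ⬝ᵥ c = 0 :=
  (Submodule.span_le.2 hx : Submodule.span K A ≤ LinearMap.ker (dotProductBilin K K x)) hc

theorem finrank_span_lt_card {ι K : Type*} [Fintype ι] [Field K] {A : Set (ι → K)} {s : ι → K}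
    (hs : s ≠ 0) (hA : ∀ c ∈ A, s ⬝ᵥ c = 0) :
    Module.finrank K (Submodule.span K A) < Fintype.card ι := by
  classical
  obtain ⟨i, hi⟩ := Function.ne_iff.1 hs
  rw [← Module.finrank_fintype_fun_eq_card K]
  refine Submodule.finrank_lt fun htop => hi ?_
  have := dotProduct_eq_zero_of_mem_span hA (htop ▸ Submodule.mem_top : Pi.single i 1 ∈ _)
  rwa [dotProduct_single, mul_one] at this

theorem intCast_dotProduct_intCast {ι : Type*} [Fintype ι] (x c : ι → ℤ) :
    (Int.cast ∘ x : ι → ℚ) ⬝ᵥ (Int.cast ∘ c) = (x ⬝ᵥ c : ℤ) := by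
  simp [dotProduct]

/-- The nonzero integer functionals whose coefficients obey the bound that Siegel's lemma gives
for systems of equations with coefficients at most `m`. -/
noncomputable def smallFunctionals (d m : ℕ) : Finset (Fin d → ℤ) :=
  (cube d ((d * m) ^ (d - 1))).erase 0

theorem mem_smallFunctionals {m : ℕ} {r : Fin d → ℤ} :
    r ∈ smallFunctionals d m ↔ r ≠ 0 ∧ vnorm r ≤ (d * m) ^ (d - 1) := by
  rw [smallFunctionals, Finset.mem_erase, mem_cube]

theorem card_smallFunctionals_le (d m : ℕ) :
    (smallFunctionals d m).card ≤ (2 * (d * m) ^ (d - 1) + 1) ^ d :=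
  (Finset.card_le_card (Finset.erase_subset _ _)).trans_eq (card_cube _ _)

theorem exists_smallFunctional_vanishing {m : ℕ} (hm : 1 ≤ m) {s : Fin d → ℤ} (hs : s ≠ 0) :
    ∃ x ∈ smallFunctionals d m, ∀ c ∈ cube d m, s ⬝ᵥ c = 0 → x ⬝ᵥ c = 0 := by
  let v : {c // c ∈ cube d m ∧ s ⬝ᵥ c = 0} → Fin d → ℚ := fun c => Int.cast ∘ c.1
  obtain ⟨κ, f, -, hspan, hli⟩ := exists_linearIndependent' ℚ v
  have := hli.finite
  have := Fintype.ofFinite κ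
  have hcard : Fintype.card κ < d := by
    have hs' : (Int.cast ∘ s : Fin d → ℚ) ≠ 0 := fun h =>
      hs (funext fun i => Int.cast_eq_zero.1 (congrFun h i))
    rw [← finrank_span_eq_card hli, hspan]
    refine (finrank_span_lt_card hs' (Set.forall_mem_range.2 fun c => ?_)).trans_eq (by simp)
    rw [intCast_dotProduct_intCast, c.2.2, Int.cast_zero]
  obtain ⟨x, hx0, hAx, hx⟩ := exists_ne_zero_mulVec_eq_zero_vnorm_le hm (Matrix.of fun k => (f k).1)
    hcard fun k j => vnorm_le_iff.1 (mem_cube.1 (f k).2.1) j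
  refine ⟨x, mem_smallFunctionals.2 ⟨hx0, hx⟩, fun c hc hsc => ?_⟩
  have hrow : ∀ k, (Int.cast ∘ x : Fin d → ℚ) ⬝ᵥ v (f k) = 0 := fun k => by
    rw [intCast_dotProduct_intCast, dotProduct_comm, Int.cast_eq_zero]
    exact congrFun hAx k
  have hcspan : v ⟨c, hc, hsc⟩ ∈ Submodule.span ℚ (Set.range (v ∘ f)) :=
    hspan ▸ Submodule.subset_span ⟨_, rfl⟩
  have := dotProduct_eq_zero_of_mem_span (Set.forall_mem_range.2 hrow) hcspan
  rwa [intCast_dotProduct_intCast, Int.cast_eq_zero] at this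

theorem exists_mem_cube_dotProduct_ne_zero {m : ℕ} (hm : 1 ≤ m) {x : Fin d → ℤ} (hx : x ≠ 0) :
    ∃ c ∈ cube d m, x ⬝ᵥ c ≠ 0 := by
  obtain ⟨i, hi⟩ := Function.ne_iff.1 hx
  refine ⟨Pi.single i 1, mem_cube.2 ((vnorm_single i 1).trans_le hm), ?_⟩
  rwa [dotProduct_single, mul_one]

theorem exists_signConformal_smallFunctional {m : ℕ} (hm : 1 ≤ m) {s : Fin d → ℤ} (hs : s ≠ 0) :
    ∃ r ∈ smallFunctionals d m, SignConformal (cube d m) s r := by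
  have hneg : ∀ x ∈ smallFunctionals d m, -x ∈ smallFunctionals d m := fun x hx => by
    rw [mem_smallFunctionals] at hx ⊢
    exact ⟨neg_ne_zero.2 hx.1, (vnorm_neg x).trans_le hx.2⟩
  have helem : ∀ s : Fin d → ℤ, s ≠ 0 → ∃ x ∈ smallFunctionals d m,
      x ≠ 0 ∧ ∀ c ∈ cube d m, s ⬝ᵥ c = 0 → x ⬝ᵥ c = 0 := fun s hs => by
    obtain ⟨x, hx, hvan⟩ := exists_smallFunctional_vanishing hm hs
    exact ⟨x, hx, (mem_smallFunctionals.1 hx).1, hvan⟩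
  obtain ⟨r, hr, -, hconf⟩ := exists_signConformal_mem
    (fun x => exists_mem_cube_dotProduct_ne_zero hm) hneg helem hs
  exact ⟨r, hr, hconf⟩

end Siegel

section Slack

variable {ι : Type*} [Fintype ι] {C R : Finset (ι → ℤ)} {N : ℤ} {a s r r' : ι → ℤ}

/-- The support function of the zonotope spanned by the segments `[-c, c]` for `c` in `C`. -/
def zonotopeSupport (C : Finset (ι → ℤ)) (r : ι → ℤ) : ℤ := ∑ c ∈ C, |r ⬝ᵥ c|

/-- The margin by which the point `a` satisfies the inequality that the functional `r` imposes on
the `N`-fold zonotope of `C`. -/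
def slack (C : Finset (ι → ℤ)) (N : ℤ) (a r : ι → ℤ) : ℤ := N * zonotopeSupport C r - r ⬝ᵥ a

theorem slack_smul {p : ℤ} (hp : 0 ≤ p) : slack C N a (p • r) = p * slack C N a r := by
  simp only [slack, zonotopeSupport, smul_dotProduct, smul_eq_mul, abs_mul, abs_of_nonneg hp,
    ← Finset.mul_sum]
  ring

theorem slack_add (h : ∀ c ∈ C, 0 ≤ (r ⬝ᵥ c) * (r' ⬝ᵥ c)) :
    slack C N a (r + r') = slack C N a r + slack C N a r' := by
  have : zonotopeSupport C (r + r') = zonotopeSupport C r + zonotopeSupport C r' := by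
    simp only [zonotopeSupport, add_dotProduct, ← Finset.sum_add_distrib]
    exact Finset.sum_congr rfl fun c hc =>
      (abs_add_eq_add_abs_iff _ _).2 (mul_nonneg_iff.1 (h c hc))
  rw [slack, this, slack, slack, add_dotProduct]
  ring

theorem slack_sub (C : Finset (ι → ℤ)) (N : ℤ) (a b r : ι → ℤ) :
    slack C N b r = slack C N a r - r ⬝ᵥ (b - a) := by
  rw [slack, slack, dotProduct_sub]
  ring

/-- A functional is, up to a positive factor, a conformal combination of elements of `R`, along
which the slack is additive. -/
theorem slack_nonneg_of_forall_mem (hC : ∀ x : ι → ℤ, x ≠ 0 → ∃ c ∈ C, x ⬝ᵥ c ≠ 0)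
    (hR : ∀ s : ι → ℤ, s ≠ 0 → ∃ r ∈ R, r ≠ 0 ∧ SignConformal C s r)
    (h : ∀ r ∈ R, 0 ≤ slack C N a r) (s : ι → ℤ) : 0 ≤ slack C N a s := by
  induction hn : (supportOn C s).card using Nat.strong_induction_on generalizing s with
  | _ n ih =>
  by_cases hs : s = 0
  · simp [hs, slack, zonotopeSupport]
  obtain ⟨r, hrR, hr0, hr⟩ := hR s hs
  have hvan : ∀ c ∈ C, s ⬝ᵥ c = 0 → r ⬝ᵥ c = 0 := fun c hc hsc =>
    (hr c hc).resolve_right (by rw [hsc, zero_mul]; exact lt_irrefl 0)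
  obtain ⟨c₀, hc₀, hrc₀, hsc₀, hconf⟩ := exists_signConformal_eliminate hvan (hC r hr0)
  have hq : 0 ≤ (s ⬝ᵥ c₀) * (r ⬝ᵥ c₀) := hr.mul_nonneg hc₀
  have hadd : slack C N a (eliminate s r c₀ + ((s ⬝ᵥ c₀) * (r ⬝ᵥ c₀)) • r) =
      slack C N a (eliminate s r c₀) + (s ⬝ᵥ c₀) * (r ⬝ᵥ c₀) * slack C N a r := by
    rw [← slack_smul hq]
    refine slack_add fun c hc => ?_
    rw [smul_dotProduct, smul_eq_mul, mul_left_comm]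
    exact mul_nonneg hq (hconf.mul_nonneg_of_common hr hc)
  refine nonneg_of_mul_nonneg_right ?_ (sq_pos_of_ne_zero hrc₀)
  rw [← slack_smul (sq_nonneg _), sq_smul_eq_eliminate_add, hadd]
  exact add_nonneg (ih _ (hn ▸ hconf.card_supportOn_eliminate_lt hc₀ hsc₀) _ rfl)
    (mul_nonneg hq (h r hrR))

/-- No two functionals of the list have strictly opposite signs at a point of `C`. -/
def SignCoherent (C : Finset (ι → ℤ)) (l : List (ι → ℤ)) : Prop :=
  ∀ c ∈ C, ∀ r ∈ l, ∀ r' ∈ l, ¬(0 < r ⬝ᵥ c ∧ r' ⬝ᵥ c < 0)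

theorem abs_add_le_sub_two {p q : ℤ} (hp : 0 < p) (hq : q < 0) : |p + q| ≤ |p| + |q| - 2 := by
  rw [abs_of_pos hp, abs_of_neg hq, abs_le]
  constructor <;> lia

theorem zonotopeSupport_add_le {c : ι → ℤ} (hc : c ∈ C) (hr : 0 < r ⬝ᵥ c) (hr' : r' ⬝ᵥ c < 0) :
    zonotopeSupport C (r + r') ≤ zonotopeSupport C r + zonotopeSupport C r' - 2 := by
  classical
  simp only [zonotopeSupport, ← Finset.sum_add_distrib, add_dotProduct]
  rw [← Finset.add_sum_erase C _ hc, ← Finset.add_sum_erase C _ hc, add_sub_right_comm]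
  exact add_le_add (abs_add_le_sub_two hr hr') (Finset.sum_le_sum fun _ _ => abs_add_le _ _)

/-- If two functionals of slack below `N` had opposite signs at a point, their sum would have
negative slack. -/
theorem signCoherent_of_slack_lt (hN : 0 ≤ N) (h : ∀ s, 0 ≤ slack C N a s) {l : List (ι → ℤ)}
    (hl : ∀ r ∈ l, slack C N a r < N) : SignCoherent C l := by
  rintro c hc r hr r' hr' ⟨hpos, hneg⟩
  have hsum := mul_le_mul_of_nonneg_left (zonotopeSupport_add_le hc hpos hneg) hN
  have h₀ := h (r + r')
  have h₁ := hl r hr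
  have h₂ := hl r' hr'
  simp only [slack, add_dotProduct] at h₀ h₁ h₂
  linarith

theorem le_slack_zero (hN : 0 ≤ N) (hr : ∃ c ∈ C, r ⬝ᵥ c ≠ 0) : N ≤ slack C N 0 r := by
  obtain ⟨c, hc, hrc⟩ := hr
  have : 1 ≤ zonotopeSupport C r := calc
    1 ≤ |r ⬝ᵥ c| := Int.one_le_abs hrc
    _ ≤ zonotopeSupport C r :=
      Finset.single_le_sum (f := fun c => |r ⬝ᵥ c|) (fun _ _ => abs_nonneg _) hc
  rw [slack, dotProduct_zero, sub_zero]
  exact le_mul_of_one_le_right hN this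

theorem slack_cube_nonneg {m : ℕ} {N : ℤ} {a : Fin d → ℤ} (hm : 1 ≤ m)
    (h : ∀ r ∈ smallFunctionals d m, 0 ≤ slack (cube d m) N a r) (s : Fin d → ℤ) :
    0 ≤ slack (cube d m) N a s :=
  slack_nonneg_of_forall_mem (fun _ => exists_mem_cube_dotProduct_ne_zero hm)
    (fun _ hs => (exists_signConformal_smallFunctional hm hs).imp fun _ hr =>
      ⟨hr.1, (mem_smallFunctionals.1 hr.1).1, hr.2⟩) h s

theorem vnorm_le_of_slack_nonneg {m N : ℕ} {a : Fin d → ℤ}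
    (h : ∀ s, 0 ≤ slack (cube d m) N a s) : vnorm a ≤ N * ((2 * m + 1) ^ d * m) := by
  have hsingle : ∀ i (ε : ℤ), |ε| = 1 → ε * a i ≤ (N * ((2 * m + 1) ^ d * m) : ℕ) := by
    intro i ε hε
    have habs : ∀ c ∈ cube d m, |(Pi.single i ε : Fin d → ℤ) ⬝ᵥ c| ≤ m := fun c hc => by
      rw [single_dotProduct, abs_mul, hε, one_mul]
      exact vnorm_le_iff.1 (mem_cube.1 hc) i
    have hsupp : zonotopeSupport (cube d m) (Pi.single i ε) ≤ ((2 * m + 1) ^ d * m : ℕ) := by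
      refine (Finset.sum_le_card_nsmul _ _ _ habs).trans_eq ?_
      rw [card_cube, nsmul_eq_mul, Nat.cast_mul]
    have hs := h (Pi.single i ε)
    rw [slack, single_dotProduct, sub_nonneg] at hs
    rw [Nat.cast_mul]
    exact hs.trans (mul_le_mul_of_nonneg_left hsupp N.cast_nonneg)
  refine vnorm_le_iff.2 fun i => abs_le.2 ⟨?_, ?_⟩
  · linarith [hsingle i (-1) rfl]
  · linarith [hsingle i 1 rfl]

end Slack

section Lexicographic

variable {ι : Type*} [Fintype ι] {C : Finset (ι → ℤ)} {l l' : List (ι → ℤ)} {r x y : ι → ℤ}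

/-- The values at `x` of the functionals in the list form a lexicographically nonpositive list. -/
def LexNonpos : List (ι → ℤ) → (ι → ℤ) → Prop
  | [], _ => True
  | r :: l, x => r ⬝ᵥ x < 0 ∨ (r ⬝ᵥ x = 0 ∧ LexNonpos l x)

theorem lexNonpos_zero : ∀ l : List (ι → ℤ), LexNonpos l 0
  | [] => trivial
  | _ :: l => Or.inr ⟨dotProduct_zero _, lexNonpos_zero l⟩

theorem LexNonpos.add (hx : LexNonpos l x) (hy : LexNonpos l y) : LexNonpos l (x + y) := by
  induction l with
  | nil => trivial
  | cons r l ih =>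
    rw [LexNonpos, dotProduct_add]
    rcases hx with hx | ⟨hx, hx'⟩ <;> rcases hy with hy | ⟨hy, hy'⟩
    · exact Or.inl (add_neg hx hy)
    · exact Or.inl (by rwa [hy, add_zero])
    · exact Or.inl (by rwa [hx, zero_add])
    · exact Or.inr ⟨by rw [hx, hy, add_zero], ih hx' hy'⟩

theorem lexNonpos_or_neg (l : List (ι → ℤ)) (x : ι → ℤ) : LexNonpos l x ∨ LexNonpos l (-x) := by
  induction l with
  | nil => exact Or.inl trivial
  | cons r l ih =>
    simp only [LexNonpos, dotProduct_neg]
    rcases lt_trichotomy (r ⬝ᵥ x) 0 with h | h | h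
    · exact Or.inl (Or.inl h)
    · exact ih.imp (fun ih => Or.inr ⟨h, ih⟩) fun ih => Or.inr ⟨by rw [h, neg_zero], ih⟩
    · exact Or.inr (Or.inl (neg_neg_of_pos h))

theorem LexNonpos.of_isPrefix (h : l <+: l') (hx : LexNonpos l' x) : LexNonpos l x := by
  obtain ⟨t, rfl⟩ := h
  induction l with
  | nil => trivial
  | cons r l ih => exact hx.imp_right (And.imp_right ih)

/-- The first functional that does not vanish at `x` is negative there, and the others cannot have
the opposite sign. -/
theorem LexNonpos.dotProduct_nonpos (hx : LexNonpos l x) (hl : SignCoherent C l) (hxC : x ∈ C)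
    (hr : r ∈ l) : r ⬝ᵥ x ≤ 0 := by
  induction l with
  | nil => simp at hr
  | cons r₀ l ih =>
    rcases hx with hx | ⟨hx, hx'⟩
    · exact not_lt.1 fun hpos => hl x hxC r hr r₀ List.mem_cons_self ⟨hpos, hx⟩
    · rcases List.mem_cons.1 hr with rfl | hr
      · exact hx.le
      · exact ih hx' (fun c hc r₁ h₁ r₂ h₂ =>
          hl c hc r₁ (List.mem_cons_of_mem _ h₁) r₂ (List.mem_cons_of_mem _ h₂)) hr

theorem exists_lexMax (l : List (ι → ℤ)) {A : Set (ι → ℤ)} (hA : A.Finite) (hne : A.Nonempty) :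
    ∃ s ∈ A, ∀ t ∈ A, LexNonpos l (t - s) := by
  have : Finite A := hA
  have : Nonempty A := hne.to_subtype
  let le : A → A → Prop := fun t s => LexNonpos l (t.1 - s.1)
  have hrefl : ∀ s, le s s := fun s => by simpa only [le, sub_self] using lexNonpos_zero l
  have : IsTrans A le := ⟨fun a b c hab hbc => by
    simpa only [le, sub_add_sub_cancel] using hab.add hbc⟩
  have hdir : Directed le id := fun t s => (lexNonpos_or_neg l (t.1 - s.1)).elim
    (fun h => ⟨s, h, hrefl s⟩) fun h => ⟨t, hrefl t, by simpa only [le, id, neg_sub] using h⟩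
  obtain ⟨s, hs⟩ := hdir.finite_le id
  exact ⟨s, s.2, fun t ht => hs ⟨t, ht⟩⟩

end Lexicographic

section Walks

variable {V M : Type*} {A : Set (V × M × V)} {v v' : V} {w w₁ w₂ : List (V × M × V)}

/-- `IsWalk A v w u`: the labelled edges in `w` belong to `A` and lead consecutively from `v` to
`u`. -/
def IsWalk (A : Set (V × M × V)) : V → List (V × M × V) → V → Prop
  | v, [], u => v = u
  | v, e :: w, u => e ∈ A ∧ e.1 = v ∧ IsWalk A e.2.2 w u

/-- The sum of the labels of the edges of a walk. -/
def weight [AddMonoid M] (w : List (V × M × V)) : M := (w.map (·.2.1)).sum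

theorem weight_nil [AddMonoid M] : weight ([] : List (V × M × V)) = 0 := rfl

theorem weight_cons [AddMonoid M] (e : V × M × V) (w : List (V × M × V)) :
    weight (e :: w) = e.2.1 + weight w :=
  List.sum_cons

theorem weight_append [AddMonoid M] (w₁ w₂ : List (V × M × V)) :
    weight (w₁ ++ w₂) = weight w₁ + weight w₂ := by
  rw [weight, List.map_append, List.sum_append, weight, weight]

theorem isWalk_append :
    IsWalk A v (w₁ ++ w₂) v' ↔ ∃ u, IsWalk A v w₁ u ∧ IsWalk A u w₂ v' := by
  induction w₁ generalizing v with
  | nil => simp only [List.nil_append, IsWalk, exists_eq_left']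
  | cons e w₁ ih => simp only [List.cons_append, IsWalk, ih, and_assoc, exists_and_left]

theorem exists_isWalk_of_steps [AddCommGroup M] {ρ : ℕ → V × M} {τ k : ℕ}
    (h : ∀ t, τ ≤ t → t < τ + k → ((ρ t).1, (ρ (t + 1)).2 - (ρ t).2, (ρ (t + 1)).1) ∈ A) :
    ∃ w, IsWalk A (ρ τ).1 w (ρ (τ + k)).1 ∧ weight w = (ρ (τ + k)).2 - (ρ τ).2 := by
  induction k with
  | zero => exact ⟨[], rfl, (sub_self _).symm⟩
  | succ k ih =>
    obtain ⟨w, hw, hweight⟩ := ih fun t h₁ h₂ => h t h₁ (by lia)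
    refine ⟨w ++ [_], isWalk_append.2 ⟨_, hw, h (τ + k) (by lia) (by lia), rfl, rfl⟩, ?_⟩
    rw [weight_append, hweight, weight_cons, weight_nil, add_zero, add_comm, sub_add_sub_cancel,
      add_assoc]

theorem IsWalk.mono {B : Set (V × M × V)} (h : A ⊆ B) (hw : IsWalk A v w v') :
    IsWalk B v w v' := by
  induction w generalizing v with
  | nil => exact hw
  | cons e w ih => exact ⟨h hw.1, hw.2.1, ih hw.2.2⟩

theorem IsWalk.subset (hw : IsWalk A v w v') : ∀ e ∈ w, e ∈ A := by
  induction w generalizing v with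
  | nil => simp
  | cons e w ih => exact List.forall_mem_cons.2 ⟨hw.1, ih hw.2.2⟩

theorem dotProduct_weight_le_length_mul {ι : Type*} [Fintype ι] {r : ι → ℤ} {D : ℤ}
    {w : List (V × (ι → ℤ) × V)} (hD : ∀ e ∈ w, r ⬝ᵥ e.2.1 ≤ D) :
    r ⬝ᵥ weight w ≤ w.length * D := by
  induction w with
  | nil => simp [weight_nil]
  | cons e w ih =>
    rw [List.forall_mem_cons] at hD
    rw [weight_cons, dotProduct_add, List.length_cons, Nat.cast_succ, add_one_mul, add_comm]
    exact add_le_add (ih hD.2) hD.1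

theorem vnorm_weight_le {M : ℕ} {w : List (V × (Fin d → ℤ) × V)}
    (hM : ∀ e ∈ w, vnorm e.2.1 ≤ M) : vnorm (weight w) ≤ w.length * M := by
  induction w with
  | nil => simp [weight_nil, vnorm]
  | cons e w ih =>
    rw [List.forall_mem_cons] at hM
    rw [weight_cons, List.length_cons, add_one_mul, add_comm]
    exact (vnorm_add_le _ _).trans (by linarith [ih hM.2, hM.1])

variable {ι : Type*} [Fintype ι] {A : Set (V × (ι → ℤ) × V)} {r : ι → ℤ}

/-- A loop closed by the first edge has distinct sources, so its weight is controlled by `hcyc`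
and it can be cut off. -/
theorem IsWalk.exists_nodup [Fintype V]
    (hcyc : ∀ v w, IsWalk A v w v → w.length ≤ Fintype.card V → r ⬝ᵥ weight w ≤ 0)
    {w : List (V × (ι → ℤ) × V)} (hw : IsWalk A v w v') :
    ∃ w', IsWalk A v w' v' ∧ (w'.map Prod.fst).Nodup ∧ r ⬝ᵥ weight w ≤ r ⬝ᵥ weight w' := by
  induction w generalizing v with
  | nil => exact ⟨[], hw, List.nodup_nil, le_rfl⟩
  | cons e w ih =>
    obtain ⟨heA, rfl, hw⟩ := hw
    obtain ⟨w', hw', hnodup, hle⟩ := ih hw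
    rw [weight_cons, dotProduct_add]
    by_cases he : e.1 ∈ w'.map Prod.fst
    · obtain ⟨e', he', hsource⟩ := List.mem_map.1 he
      obtain ⟨loop, rest, rfl⟩ := List.append_of_mem he'
      obtain ⟨u, hloop, hrest⟩ := isWalk_append.1 hw'
      obtain rfl : e.1 = u := hsource.symm.trans hrest.2.1
      rw [List.map_append, List.nodup_append] at hnodup
      have hdistinct : ((e :: loop).map Prod.fst).Nodup :=
        List.nodup_cons.2 ⟨fun h => hnodup.2.2 _ h _ List.mem_cons_self hsource.symm, hnodup.1⟩
      have hclosed := hcyc e.1 (e :: loop) ⟨heA, rfl, hloop⟩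
        (by simpa only [List.length_map] using hdistinct.length_le_card)
      refine ⟨e' :: rest, hrest, hnodup.2.1, ?_⟩
      rw [weight_cons, dotProduct_add] at hclosed
      rw [weight_append, dotProduct_add] at hle
      linarith
    · refine ⟨e :: w', ⟨heA, rfl, hw'⟩, List.nodup_cons.2 ⟨he, hnodup⟩, ?_⟩
      rw [weight_cons, dotProduct_add]
      exact Int.add_le_add_left hle _

theorem IsWalk.dotProduct_weight_le [Fintype V] {D : ℤ} (hD : 0 ≤ D)
    (hA : ∀ e ∈ A, r ⬝ᵥ e.2.1 ≤ D)
    (hcyc : ∀ v w, IsWalk A v w v → w.length ≤ Fintype.card V → r ⬝ᵥ weight w ≤ 0)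
    {w : List (V × (ι → ℤ) × V)} (hw : IsWalk A v w v') :
    r ⬝ᵥ weight w ≤ Fintype.card V * D := by
  obtain ⟨w', hw', hnodup, hle⟩ := hw.exists_nodup hcyc
  have hlength : w'.length ≤ Fintype.card V := by
    simpa only [List.length_map] using hnodup.length_le_card
  calc r ⬝ᵥ weight w ≤ r ⬝ᵥ weight w' := hle
    _ ≤ w'.length * D := dotProduct_weight_le_length_mul fun e he => hA e (hw'.subset e he)
    _ ≤ Fintype.card V * D := mul_le_mul_of_nonneg_right (Nat.cast_le.2 hlength) hD

end Walks

section OptimalEdges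

variable {V ι : Type*} [Fintype ι] {l l' : List (ι → ℤ)} {S : Set (V × (ι → ℤ))} {v v' : V}
  {w : List (V × (ι → ℤ) × V)}

/-- `s` is lexicographically maximal, with respect to `l`, among the points of `S` above `v`. -/
def IsLexMax (S : Set (V × (ι → ℤ))) (l : List (ι → ℤ)) (v : V) (s : ι → ℤ) : Prop :=
  (v, s) ∈ S ∧ ∀ s', (v, s') ∈ S → LexNonpos l (s' - s)

theorem exists_isLexMax (hS : S.Finite) (l : List (ι → ℤ)) (hv : ∃ s, (v, s) ∈ S) :
    ∃ s, IsLexMax S l v s :=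
  exists_lexMax l (hS.preimage (Prod.mk_right_injective v).injOn) hv

/-- The labelled edges that lead from a lexicographically maximal point of `S` into `S`. -/
def optimalEdges (S : Set (V × (ι → ℤ))) (l : List (ι → ℤ)) : Set (V × (ι → ℤ) × V) :=
  {e | ∃ s, IsLexMax S l e.1 s ∧ (e.2.2, s + e.2.1) ∈ S}

theorem optimalEdges_subset_of_isPrefix (h : l <+: l') : optimalEdges S l' ⊆ optimalEdges S l :=
  fun _ ⟨s, ⟨hs, hmax⟩, hmem⟩ => ⟨s, ⟨hs, fun s' hs' => (hmax s' hs').of_isPrefix h⟩, hmem⟩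

/-- Replacing a point by the maximal one before each step only increases it, and the walk keeps it
in `S`. -/
theorem IsWalk.exists_lexNonpos (hw : IsWalk (optimalEdges S l) v w v') {s : ι → ℤ}
    (hs : (v, s) ∈ S) : ∃ s', (v', s') ∈ S ∧ LexNonpos l (s + weight w - s') := by
  induction w generalizing v s with
  | nil =>
    obtain rfl := hw
    refine ⟨s, hs, ?_⟩
    rw [weight_nil, add_zero, sub_self]
    exact lexNonpos_zero l
  | cons e w ih =>
    obtain ⟨⟨s₀, ⟨-, hmax⟩, hmem⟩, rfl, hw⟩ := hw
    obtain ⟨s', hs', hlex⟩ := ih hw hmem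
    refine ⟨s', hs', ?_⟩
    rw [weight_cons]
    convert (hmax s hs).add hlex using 1
    abel

theorem IsWalk.lexNonpos_weight (hw : IsWalk (optimalEdges S l) v w v) (hne : w ≠ []) :
    LexNonpos l (weight w) := by
  obtain ⟨e, w, rfl⟩ := List.exists_cons_of_ne_nil hne
  obtain ⟨⟨s₀, ⟨-, hmax⟩, hmem⟩, rfl, hw'⟩ := hw
  obtain ⟨s', hs', hlex⟩ := hw'.exists_lexNonpos hmem
  rw [weight_cons]
  convert hlex.add (hmax s' hs') using 1
  abel

theorem IsWalk.dotProduct_weight_le_of_signCoherent [Fintype V] {M : ℕ} {D : ℤ} {r : Fin d → ℤ}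
    {l : List (Fin d → ℤ)} {w : List (V × (Fin d → ℤ) × V)}
    (hl : SignCoherent (cube d (Fintype.card V * M)) l) (hr : r ∈ l)
    {S : Set (V × (Fin d → ℤ))} {A : Set (V × (Fin d → ℤ) × V)} (hA : A ⊆ optimalEdges S l)
    (hM : ∀ e ∈ A, vnorm e.2.1 ≤ M) (hD : 0 ≤ D) (hrD : ∀ e ∈ A, r ⬝ᵥ e.2.1 ≤ D)
    (hw : IsWalk A v w v') : r ⬝ᵥ weight w ≤ Fintype.card V * D := by
  refine hw.dotProduct_weight_le hD hrD fun u w hw hlength => ?_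
  rcases eq_or_ne w [] with rfl | hne
  · rw [weight_nil, dotProduct_zero]
  have hcube : weight w ∈ cube d (Fintype.card V * M) := mem_cube.2 <|
    (vnorm_weight_le fun e he => hM e (hw.subset e he)).trans (Nat.mul_le_mul_right M hlength)
  exact ((hw.mono hA).lexNonpos_weight hne).dotProduct_nonpos hl hcube hr

end OptimalEdges

section PriorityLists

variable {α : Type*} [DecidableEq α] {T : ℕ → Finset α} {l : List α} {r : α} {τ t : ℕ}

/-- The members of `T`, first those in `l`, in the order of `l`, and then the other ones. -/
noncomputable def reprioritize (l : List α) (T : Finset α) : List α :=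
  l.filter (· ∈ T) ++ (T \ l.toFinset).toList

/-- The members of `T t` in order of seniority: an element is moved to the end of the list whenever
it re-enters the varying set. -/
noncomputable def priorityList (T : ℕ → Finset α) (t : ℕ) : List α :=
  ((List.range (t + 1)).map T).foldl reprioritize []

/-- The part of the list in front of the first occurrence of `r`. -/
def before (r : α) (l : List α) : List α := l.takeWhile (· ≠ r)

theorem mem_reprioritize {T : Finset α} : r ∈ reprioritize l T ↔ r ∈ T := by
  simp only [reprioritize, List.mem_append, List.mem_filter, decide_eq_true_eq, Finset.mem_toList,
    Finset.mem_sdiff, List.mem_toFinset]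
  tauto

theorem nodup_reprioritize (hl : l.Nodup) (T : Finset α) : (reprioritize l T).Nodup := by
  refine List.nodup_append.2 ⟨hl.filter _, Finset.nodup_toList _, ?_⟩
  rintro x hx _ hy rfl
  exact (Finset.mem_sdiff.1 (Finset.mem_toList.1 hy)).2
    (List.mem_toFinset.2 (List.mem_of_mem_filter hx))

theorem before_append_cons {p : List α} (h : r ∉ p) (q : List α) : before r (p ++ r :: q) = p := by
  rw [before, List.takeWhile_append_of_pos fun x hx => by
    simpa only [ne_eq, decide_not, Bool.not_eq_true', decide_eq_false_iff_not] using
      ne_of_mem_of_not_mem hx h]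
  simp

theorem before_reprioritize {T : Finset α} (hl : r ∈ l) (hT : r ∈ T) :
    before r (reprioritize l T) = (before r l).filter (· ∈ T) := by
  obtain ⟨p, q, rfl, hp⟩ := List.eq_append_cons_of_mem hl
  rw [reprioritize, List.filter_append,
    List.filter_cons_of_pos (p := fun x => decide (x ∈ T)) (decide_eq_true hT),
    List.append_assoc, List.cons_append, before_append_cons (mt List.mem_of_mem_filter hp),
    before_append_cons hp]

theorem priorityList_succ (T : ℕ → Finset α) (t : ℕ) :
    priorityList T (t + 1) = reprioritize (priorityList T t) (T (t + 1)) := by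
  rw [priorityList, List.range_succ, List.map_append, List.foldl_append]
  rfl

theorem mem_priorityList : r ∈ priorityList T t ↔ r ∈ T t := by
  cases t with
  | zero => exact mem_reprioritize
  | succ t => rw [priorityList_succ, mem_reprioritize]

theorem nodup_priorityList (T : ℕ → Finset α) (t : ℕ) : (priorityList T t).Nodup := by
  induction t with
  | zero => exact nodup_reprioritize List.nodup_nil _
  | succ t ih => exact priorityList_succ T t ▸ nodup_reprioritize ih _

theorem before_append_isPrefix (hr : r ∈ l) : before r l ++ [r] <+: l := by
  obtain ⟨p, q, rfl, hp⟩ := List.eq_append_cons_of_mem hr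
  exact ⟨q, by rw [before_append_cons hp, List.append_assoc, List.singleton_append]⟩

theorem length_before_priorityList_lt (hr : r ∈ T t) :
    (before r (priorityList T t)).length < (T t).card := by
  have hlen := (before_append_isPrefix (mem_priorityList.2 hr)).length_le
  rw [List.length_append, List.length_singleton] at hlen
  refine hlen.trans_eq ?_
  rw [← List.toFinset_card_of_nodup (nodup_priorityList T t)]
  congr 1
  ext r
  rw [List.mem_toFinset, mem_priorityList]

/-- At the instants from `τ` to `t`, the element `r` belongs to the varying set and the same list
of elements has priority over it. -/
def Persists (T : ℕ → Finset α) (r : α) (τ t : ℕ) : Prop :=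
  ∀ t', τ ≤ t' → t' ≤ t → r ∈ T t' ∧ before r (priorityList T t') = before r (priorityList T t)

theorem Persists.refl (hr : r ∈ T t) : Persists T r t t := fun t' h h' => by
  obtain rfl := h'.antisymm h
  exact ⟨hr, rfl⟩

theorem Persists.succ (h : Persists T r τ t) (hr : r ∈ T (t + 1))
    (heq : before r (priorityList T (t + 1)) = before r (priorityList T t)) :
    Persists T r τ (t + 1) := fun t' hτ ht => by
  rcases ht.lt_or_eq with ht | rfl
  · exact heq ▸ h t' hτ (Nat.le_of_lt_succ ht)
  · exact ⟨hr, rfl⟩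

variable {R : Finset α} {sl : ℕ → α → ℤ} {N D W : ℤ}

/-- Each element that loses priority over `r` pays for one loss of `W + D` by `r`. -/
theorem exists_persists_of_mem_tight (hT : ∀ t, T t = R.filter (sl t · < N)) (hD : 0 ≤ D)
    (hW : 0 ≤ W) (hinit : ∀ r ∈ R, N ≤ sl 0 r) (hstep : ∀ t, ∀ r ∈ R, sl t r - D ≤ sl (t + 1) r)
    (hpersist : ∀ τ t r, τ ≤ t → Persists T r τ t → (∀ r ∈ R, 0 ≤ sl τ r) → sl τ r - W ≤ sl t r)
    (hprev : ∀ τ < t, ∀ r ∈ R, 0 ≤ sl τ r) (hr : r ∈ T t) :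
    ∃ τ ≤ t, Persists T r τ t ∧
      N - (R.card - (before r (priorityList T t)).length) * (W + D) ≤ sl τ r := by
  have hmem : ∀ {t r}, r ∈ T t ↔ r ∈ R ∧ sl t r < N := by simp [hT]
  induction t with
  | zero => exact absurd (hinit r (hmem.1 hr).1) (hmem.1 hr).2.not_ge
  | succ t ih =>
    have hrR := (hmem.1 hr).1
    have hrank : ((before r (priorityList T (t + 1))).length : ℤ) + 1 ≤ R.card := by
      have hcard := Finset.card_le_card ((hT (t + 1)).trans_subset (Finset.filter_subset _ _))
      exact_mod_cast (length_before_priorityList_lt hr).trans_le hcard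
    by_cases hrt : r ∈ T t
    · obtain ⟨τ, hτ, hτt, hsl⟩ := ih (fun τ hτ => hprev τ (hτ.trans t.lt_succ_self)) hrt
      by_cases heq : before r (priorityList T (t + 1)) = before r (priorityList T t)
      · exact ⟨τ, hτ.trans t.le_succ, hτt.succ hr heq, heq ▸ hsl⟩
      · have hlt : ((before r (priorityList T (t + 1))).length : ℤ) + 1 ≤
            (before r (priorityList T t)).length := by
          rw [priorityList_succ, before_reprioritize (mem_priorityList.2 hrt) hr] at heq ⊢
          exact_mod_cast lt_of_le_of_ne (List.length_filter_le _ _)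
            (mt List.filter_sublist.eq_of_length heq)
        have hwalk := hpersist τ t r hτ hτt (hprev τ (Nat.lt_succ_of_le hτ))
        refine ⟨t + 1, le_rfl, Persists.refl hr, ?_⟩
        nlinarith [hstep t r hrR, mul_le_mul_of_nonneg_right hlt (add_nonneg hW hD)]
    · have hslack : N ≤ sl t r := not_lt.1 fun h => hrt (hmem.2 ⟨hrR, h⟩)
      refine ⟨t + 1, le_rfl, Persists.refl hr, ?_⟩
      nlinarith [hstep t r hrR, mul_le_mul_of_nonneg_right hrank (add_nonneg hW hD)]

theorem nonneg_of_persists_bound (hT : ∀ t, T t = R.filter (sl t · < N)) (hD : 0 ≤ D)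
    (hW : 0 ≤ W) (hN : (R.card + 1) * (W + D) ≤ N) (hinit : ∀ r ∈ R, N ≤ sl 0 r)
    (hstep : ∀ t, ∀ r ∈ R, sl t r - D ≤ sl (t + 1) r)
    (hpersist : ∀ τ t r, τ ≤ t → Persists T r τ t → (∀ r ∈ R, 0 ≤ sl τ r) → sl τ r - W ≤ sl t r)
    (t : ℕ) : ∀ r ∈ R, 0 ≤ sl t r := by
  induction t using Nat.strong_induction_on with
  | _ t ih =>
  intro r hr
  have hWD := add_nonneg hW hD
  by_cases hrt : r ∈ T t
  · obtain ⟨τ, hτ, hτt, hsl⟩ :=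
      exists_persists_of_mem_tight hT hD hW hinit hstep hpersist ih hrt
    have hanchor : W ≤ sl τ r := by
      nlinarith [mul_nonneg (Nat.cast_nonneg (α := ℤ) (before r (priorityList T t)).length) hWD]
    rcases hτ.eq_or_lt with rfl | hlt
    · exact hW.trans hanchor
    · linarith [hpersist τ t r hτ hτt (ih τ hlt)]
  · have hslack : N ≤ sl t r := not_lt.1 fun h =>
      hrt (by rw [hT]; exact Finset.mem_filter.2 ⟨hr, h⟩)
    exact (mul_nonneg (by positivity) hWD).trans (hN.trans hslack)

end PriorityLists

section SafeSets

variable {G : MWG V d} {S S' : Set (Conf V d)} {v : V}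

theorem vnorm_le_enorm {e : V × (Fin d → ℤ) × V} (he : e ∈ G.E) : vnorm e.2.1 ≤ enorm G :=
  Finset.le_sup (f := fun e => vnorm e.2.1) (G.finE.mem_toFinset.2 he)

theorem finite_setOf_step (G : MWG V d) (c : Conf V d) : {c' | Step G c c'}.Finite :=
  (G.finE.image fun e => ((e.2.2, c.2 + e.2.1) : Conf V d)).subset fun _ hc =>
    ⟨_, hc, Prod.ext rfl (add_sub_cancel _ _)⟩

/-- The controllable predecessor of `S`: the configurations from which Player 1 can force the next
configuration to lie in `S`. -/
def cpre (G : MWG V d) (S : Set (Conf V d)) : Set (Conf V d) :=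
  {c | (c.1 ∈ G.P1 → ∃ c', Step G c c' ∧ c' ∈ S) ∧ (c.1 ∉ G.P1 → ∀ c', Step G c c' → c' ∈ S)}

/-- A finite set of configurations in which Player 1 can remain forever. -/
structure IsFiniteSafe (G : MWG V d) (S : Set (Conf V d)) : Prop where
  finite : S.Finite
  subset_cpre : S ⊆ cpre G S

/-- The vertices from which Player 1 can ensure a uniform bound on the norms of the plays. -/
def safeVertices (G : MWG V d) : Set V := {v | ∃ S, IsFiniteSafe G S ∧ ∃ s, (v, s) ∈ S}

theorem cpre_inter_successors (hS : S ⊆ cpre G S') :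
    S ⊆ cpre G {c' ∈ S' | ∃ c ∈ S, Step G c c'} := fun c hc => by
  refine ⟨fun hP1 => ?_, fun hP1 c' hstep => ⟨(hS hc).2 hP1 c' hstep, c, hc, hstep⟩⟩
  obtain ⟨c', hstep, hc'⟩ := (hS hc).1 hP1
  exact ⟨c', hstep, hc', c, hc, hstep⟩

theorem cpre_mono (h : S ⊆ S') : cpre G S ⊆ cpre G S' := fun _ hc =>
  ⟨fun hP1 => (hc.1 hP1).imp fun _ => And.imp_right (@h _),
    fun hP1 c' hstep => h (hc.2 hP1 c' hstep)⟩

theorem IsFiniteSafe.translate (hS : IsFiniteSafe G S) (a : Fin d → ℤ) :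
    IsFiniteSafe G (Prod.map id (· + a) ⁻¹' S) := by
  refine ⟨hS.finite.preimage (Function.injective_id.prodMap (add_left_injective a)).injOn,
    fun c hc => ⟨fun hP1 => ?_, fun hP1 c' hstep => (hS.subset_cpre hc).2 hP1 _ ?_⟩⟩
  · obtain ⟨c', hstep, hc'⟩ := (hS.subset_cpre hc).1 hP1
    refine ⟨(c'.1, c'.2 - a), ?_, ?_⟩
    · simpa only [Step, Prod.map_fst, Prod.map_snd, id_eq, ← sub_sub, sub_right_comm] using hstep
    · simpa only [Set.mem_preimage, Prod.map_apply, id_eq, sub_add_cancel] using hc'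
  · simpa only [Step, Prod.map_fst, Prod.map_snd, id_eq, add_sub_add_right_eq_sub] using hstep

theorem IsFiniteSafe.biUnion {ι : Type*} {F : Set ι} (hF : F.Finite) {T : ι → Set (Conf V d)}
    (hT : ∀ i ∈ F, IsFiniteSafe G (T i)) : IsFiniteSafe G (⋃ i ∈ F, T i) :=
  ⟨hF.biUnion fun i hi => (hT i hi).finite, Set.iUnion₂_subset fun i hi =>
    (hT i hi).subset_cpre.trans (cpre_mono (Set.subset_biUnion_of_mem hi))⟩

theorem exists_isFiniteSafe_mem (hv : v ∈ safeVertices G) (s : Fin d → ℤ) :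
    ∃ S, IsFiniteSafe G S ∧ (v, s) ∈ S := by
  obtain ⟨S, hS, s', hs'⟩ := hv
  refine ⟨_, hS.translate (s' - s), ?_⟩
  simpa only [Set.mem_preimage, Prod.map_apply, id_eq, add_sub_cancel] using hs'

theorem exists_isFiniteSafe_superset {F : Set (Conf V d)} (hF : F.Finite)
    (hsafe : ∀ c ∈ F, c.1 ∈ safeVertices G) : ∃ T, IsFiniteSafe G T ∧ F ⊆ T := by
  choose! T hT hmem using fun c hc => exists_isFiniteSafe_mem (hsafe c hc) c.2
  exact ⟨_, IsFiniteSafe.biUnion hF hT, fun c hc => Set.mem_biUnion hc (hmem c hc)⟩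

theorem mem_safeVertices_of_subset_cpre (hfin : S.Finite)
    (hS : S ⊆ cpre G (S ∪ Prod.fst ⁻¹' safeVertices G)) {c : Conf V d} (hc : c ∈ S) :
    c.1 ∈ safeVertices G := by
  have hexits : {c' | c'.1 ∈ safeVertices G ∧ ∃ c ∈ S, Step G c c'}.Finite :=
    (hfin.biUnion fun c _ => finite_setOf_step G c).subset fun c' ⟨_, c, hc, hstep⟩ =>
      Set.mem_biUnion hc hstep
  obtain ⟨T, hT, hsub⟩ := exists_isFiniteSafe_superset hexits fun c hc => hc.1
  refine ⟨S ∪ T, ⟨hfin.union hT.finite, Set.union_subset ?_ ?_⟩, c.2, Or.inl hc⟩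
  · exact (cpre_inter_successors hS).trans
      (cpre_mono fun c' ⟨hc', hstep⟩ => hc'.imp_right fun h => hsub ⟨h, hstep⟩)
  · exact hT.subset_cpre.trans (cpre_mono Set.subset_union_right)

end SafeSets

section ConsistentPaths

theorem exists_hist_eq {V : Type} {L : ℕ → List (Conf V d)} (hL : ∀ n, L n <+: L (n + 1))
    (hlength : ∀ n, n < (L n).length) : ∃ ρ : ℕ → Conf V d, ∀ n, hist ρ (L n).length = L n := by
  have hmono : ∀ {m n}, m ≤ n → L m <+: L n := fun h => by
    induction h with
    | refl => exact List.prefix_rfl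
    | step _ ih => exact ih.trans (hL _)
  refine ⟨fun k => (L k)[k]'(hlength k), fun n => List.ext_getElem ?_ fun k hk hk' => ?_⟩
  · rw [hist, List.length_map, List.length_range]
  · simp only [hist, List.getElem_map, List.getElem_range]
    rcases le_total k n with h | h
    · exact (hmono h).getElem _
    · exact ((hmono h).getElem _).symm

theorem hist_succ {V : Type} (ρ : ℕ → Conf V d) (n : ℕ) : hist ρ (n + 1) = hist ρ n ++ [ρ n] := by
  rw [hist, List.range_succ, List.map_append, List.map_singleton, hist]

theorem hist_isPrefix_hist {V : Type} (ρ : ℕ → Conf V d) {m n : ℕ} (h : m ≤ n) :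
    hist ρ m <+: hist ρ n := by
  induction h with
  | refl => exact List.prefix_rfl
  | step _ ih => exact hist_succ ρ _ ▸ ih.trans (List.prefix_append _ _)

/-- A path from `(v₀, 0)` with last configuration `c` and history `h`, consistent with the strategy
`σ` of Player 1. -/
inductive ConsistentPath (G : MWG V d) (σ : Strat V d) (v₀ : V) :
    List (Conf V d) → Conf V d → Prop
  | nil : ConsistentPath G σ v₀ [] (v₀, 0)
  | snoc {h : List (Conf V d)} {c c' : Conf V d} (hpath : ConsistentPath G σ v₀ h c)
      (hstep : Step G c c')
      (hσ : c.1 ∈ G.P1 → c' = ((σ h c).2, c.2 + (σ h c).1)) : ConsistentPath G σ v₀ (h ++ [c]) c'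

namespace ConsistentPath

variable {G : MWG V d} {σ : Strat V d} {v₀ : V} {h h' : List (Conf V d)} {c c' : Conf V d}

theorem isPathL (hpath : ConsistentPath G σ v₀ h c) : IsPathL G (h ++ [c]) := by
  change List.IsChain _ _
  induction hpath with
  | nil => exact List.isChain_singleton _
  | snoc _ hstep _ ih =>
    refine List.isChain_append.2 ⟨ih, List.isChain_singleton _, fun x hx y hy => ?_⟩
    rw [List.getLast?_concat, Option.mem_some_iff] at hx
    rw [List.head?_singleton, Option.mem_some_iff] at hy
    exact hx ▸ hy ▸ hstep

theorem eq_of_nil (hpath : ConsistentPath G σ v₀ [] c) : c = (v₀, 0) := by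
  generalize hh : [] = h at hpath
  cases hpath with
  | nil => rfl
  | snoc => exact absurd hh.symm (List.append_ne_nil_of_right_ne_nil _ (List.cons_ne_nil _ _))

theorem of_concat (hpath : ConsistentPath G σ v₀ (h ++ [c]) c') :
    ConsistentPath G σ v₀ h c ∧ Step G c c' ∧
      (c.1 ∈ G.P1 → c' = ((σ h c).2, c.2 + (σ h c).1)) := by
  generalize hh : h ++ [c] = h' at hpath
  cases hpath with
  | nil => exact absurd hh (List.append_ne_nil_of_right_ne_nil _ (List.cons_ne_nil _ _))
  | snoc hpath hstep hσ =>
    obtain ⟨rfl, rfl⟩ := List.append_singleton_inj.1 hh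
    exact ⟨hpath, hstep, hσ⟩

theorem of_isPrefix (hpath : ConsistentPath G σ v₀ h c) (hpre : h' ++ [c'] <+: h ++ [c]) :
    ConsistentPath G σ v₀ h' c' := by
  induction hpath with
  | nil =>
    rcases List.prefix_concat_iff.1 hpre with heq | hpre
    · obtain ⟨rfl, rfl⟩ := List.append_singleton_inj.1 heq
      exact nil
    · exact absurd (List.prefix_nil.1 hpre)
        (List.append_ne_nil_of_right_ne_nil _ (List.cons_ne_nil _ _))
  | snoc hpath hstep hσ ih =>
    rcases List.prefix_concat_iff.1 hpre with heq | hpre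
    · obtain ⟨rfl, rfl⟩ := List.append_singleton_inj.1 heq
      exact hpath.snoc hstep hσ
    · exact ih hpre

theorem isPlay {ρ : ℕ → Conf V d} (hρ : ∀ n, ConsistentPath G σ v₀ (hist ρ n) (ρ n)) :
    IsPlay G v₀ ρ :=
  ⟨(hρ 0).eq_of_nil, fun n => (hist_succ ρ n ▸ hρ (n + 1)).of_concat.2.1⟩

theorem consistent {ρ : ℕ → Conf V d} (hρ : ∀ n, ConsistentPath G σ v₀ (hist ρ n) (ρ n)) :
    Consistent (G.P1 : Set V) σ ρ :=
  fun n => (hist_succ ρ n ▸ hρ (n + 1)).of_concat.2.2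

end ConsistentPath

/-- `q` extends `p` and ends with a strictly larger norm. -/
def ExtendsAbove {V : Type} (q p : List (Conf V d) × Conf V d) : Prop :=
  p.1 ++ [p.2] <+: q.1 ++ [q.2] ∧ vnorm p.2.2 < vnorm q.2.2

theorem ExtendsAbove.length_lt {V : Type} {p q : List (Conf V d) × Conf V d}
    (h : ExtendsAbove q p) : p.1.length < q.1.length := by
  rcases List.prefix_concat_iff.1 h.1 with heq | hpre
  · exact absurd h.2 ((List.append_singleton_inj.1 heq).2 ▸ lt_irrefl _)
  · simpa only [List.length_append, List.length_singleton, Nat.succ_le_iff] using hpre.length_le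

variable {G : MWG V d} {σ : Strat V d} {v₀ : V}

theorem wellFounded_extendsAbove
    (hbounded : ∀ ρ, IsPlay G v₀ ρ → Consistent (G.P1 : Set V) σ ρ → BoundedPlay ρ) :
    WellFounded fun p q : {p : List (Conf V d) × Conf V d // ConsistentPath G σ v₀ p.1 p.2} =>
      ExtendsAbove p.1 q.1 := by
  refine wellFounded_iff_isEmpty_descending_chain.2 ⟨fun ⟨p, hp⟩ => ?_⟩
  have hlength : StrictMono fun n => (p n).1.1.length :=
    strictMono_nat_of_lt_succ fun n => (hp n).length_lt
  obtain ⟨ρ, hρ⟩ := exists_hist_eq (L := fun n => (p n).1.1 ++ [(p n).1.2]) (fun n => (hp n).1)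
    fun n => by
      rw [List.length_append, List.length_singleton]
      exact Nat.lt_succ_of_le (hlength.id_le n)
  have hend : ∀ n, hist ρ (p n).1.1.length = (p n).1.1 ∧ ρ (p n).1.1.length = (p n).1.2 :=
    fun n => List.append_singleton_inj.1 <| by
      rw [← hist_succ, ← hρ n, List.length_append, List.length_singleton]
  have hpath : ∀ n, ConsistentPath G σ v₀ (hist ρ n) (ρ n) := fun n => by
    refine (p n).2.of_isPrefix ?_
    rw [← hist_succ, ← (hend n).1, ← (hend n).2, ← hist_succ]
    exact hist_isPrefix_hist ρ (Nat.succ_le_succ (hlength.id_le n))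
  obtain ⟨B, hB⟩ := hbounded ρ (ConsistentPath.isPlay hpath) (ConsistentPath.consistent hpath)
  have hnorm : StrictMono fun n => vnorm (p n).1.2.2 := strictMono_nat_of_lt_succ fun n => (hp n).2
  have hlarge : B + 1 ≤ vnorm (p (B + 1)).1.2.2 := hnorm.id_le (B + 1)
  rw [← (hend (B + 1)).2] at hlarge
  exact (hB _).not_gt hlarge

theorem mem_safeVertices_of_bounded_extensions (hσ : ValidStrat G (G.P1 : Set V) σ)
    {h : List (Conf V d)} {c : Conf V d} (hpath : ConsistentPath G σ v₀ h c) {B : ℕ}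
    (hB : ∀ h' c', ConsistentPath G σ v₀ h' c' → h ++ [c] <+: h' ++ [c'] →
      c'.1 ∉ safeVertices G → vnorm c'.2 ≤ B) : c.1 ∈ safeVertices G := by
  by_contra hnotSafe
  set S : Set (Conf V d) := {c' | c'.1 ∉ safeVertices G ∧
    ∃ h', ConsistentPath G σ v₀ h' c' ∧ h ++ [c] <+: h' ++ [c']}
  have hfin : S.Finite := by
    refine ((Set.finite_univ (α := V)).prod (cube d B).finite_toSet).subset ?_
    rintro c' ⟨hc', h', hpath', hpre⟩
    exact ⟨Set.mem_univ _, mem_cube.2 (hB h' c' hpath' hpre hc')⟩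
  refine hnotSafe (mem_safeVertices_of_subset_cpre hfin ?_ ⟨hnotSafe, h, hpath, List.prefix_rfl⟩)
  rintro c' ⟨-, h', hpath', hpre⟩
  have hnext : ∀ c'', Step G c' c'' → (c'.1 ∈ G.P1 → c'' = ((σ h' c').2, c'.2 + (σ h' c').1)) →
      c'' ∈ S ∪ Prod.fst ⁻¹' safeVertices G := fun c'' hstep hmove =>
    or_iff_not_imp_right.2 fun hc'' =>
      ⟨hc'', h' ++ [c'], hpath'.snoc hstep hmove, hpre.trans (List.prefix_append _ _)⟩
  refine ⟨fun hP1 => ?_, fun hP1 c'' hstep => hnext c'' hstep fun h => absurd h hP1⟩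
  have hstep : Step G c' ((σ h' c').2, c'.2 + (σ h' c').1) := by
    simpa only [Step, add_sub_cancel_left] using hσ h' c' hpath'.isPathL hP1
  exact ⟨_, hstep, hnext _ hstep fun _ => rfl⟩

theorem mem_safeVertices_of_p1WinsBounding (hwin : P1WinsBounding G v₀) :
    v₀ ∈ safeVertices G := by
  obtain ⟨σ, hσ, hbounded⟩ := hwin
  by_contra hv₀
  obtain ⟨⟨⟨h, c⟩, hpath⟩, hnotSafe, hmin⟩ := (wellFounded_extendsAbove hbounded).has_min
    {p | p.1.2.1 ∉ safeVertices G} ⟨⟨([], (v₀, 0)), .nil⟩, hv₀⟩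
  refine hnotSafe (mem_safeVertices_of_bounded_extensions hσ hpath (B := vnorm c.2) ?_)
  exact fun h' c' hpath' hpre hc' =>
    not_lt.1 fun hlt => hmin ⟨(h', c'), hpath'⟩ hc' ⟨hpre, hlt⟩

end ConsistentPaths

section Strategy

variable {G : MWG V d} {S : Set (Conf V d)} {v₀ : V}

theorem IsFiniteSafe.exists_edge (hS : IsFiniteSafe G S) (l : List (Fin d → ℤ)) (v : V) :
    ∃ p : (Fin d → ℤ) × V, (v, p) ∈ G.E ∧
      (v ∈ G.P1 → (∃ s, (v, s) ∈ S) → (v, p) ∈ optimalEdges S l) := by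
  by_cases h : v ∈ G.P1 ∧ ∃ s, (v, s) ∈ S
  · obtain ⟨s, hs⟩ := exists_isLexMax hS.finite l h.2
    obtain ⟨c, hstep, hc⟩ := (hS.subset_cpre hs.1).1 h.1
    refine ⟨(c.2 - s, c.1), hstep, fun _ _ => ⟨s, hs, ?_⟩⟩
    rwa [add_sub_cancel]
  · obtain ⟨u, v', he⟩ := G.serial v
    exact ⟨(u, v'), he, fun hP1 hv => absurd ⟨hP1, hv⟩ h⟩

theorem IsFiniteSafe.mem_optimalEdges (hS : IsFiniteSafe G S) (l : List (Fin d → ℤ)) {v v' : V}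
    {u : Fin d → ℤ} (hv : v ∉ G.P1) (hne : ∃ s, (v, s) ∈ S) (he : (v, u, v') ∈ G.E) :
    (v, u, v') ∈ optimalEdges S l := by
  obtain ⟨s, hs⟩ := exists_isLexMax hS.finite l hne
  refine ⟨s, hs, (hS.subset_cpre hs.1).2 hv _ ?_⟩
  simpa only [Step, add_sub_cancel_left] using he

theorem IsFiniteSafe.exists_strat (hS : IsFiniteSafe G S) (hv₀ : ∃ s, (v₀, s) ∈ S)
    (memory : List (Conf V d) → List (Fin d → ℤ)) :
    ∃ σ : Strat V d, ValidStrat G (G.P1 : Set V) σ ∧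
      ∀ ρ, IsPlay G v₀ ρ → Consistent (G.P1 : Set V) σ ρ → ∀ t,
        ((ρ t).1, (ρ (t + 1)).2 - (ρ t).2, (ρ (t + 1)).1) ∈
          optimalEdges S (memory (hist ρ (t + 1))) := by
  choose move hmoveE hmoveS using hS.exists_edge
  refine ⟨fun h c => move (memory (h ++ [c])) c.1, fun h c _ _ => hmoveE _ _, fun ρ hρ hσ => ?_⟩
  have hstep : ∀ t, (∃ s, ((ρ t).1, s) ∈ S) →
      ((ρ t).1, (ρ (t + 1)).2 - (ρ t).2, (ρ (t + 1)).1) ∈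
        optimalEdges S (memory (hist ρ (t + 1))) := fun t hne => by
    by_cases hP1 : (ρ t).1 ∈ G.P1
    · rw [hσ t hP1, add_sub_cancel_left, hist_succ]
      exact hmoveS _ _ hP1 hne
    · exact hS.mem_optimalEdges _ hP1 hne (hρ.2 t)
  have hne : ∀ t, ∃ s, ((ρ t).1, s) ∈ S := fun t => by
    induction t with
    | zero => rwa [hρ.1]
    | succ t ih =>
      obtain ⟨s, -, hs⟩ := hstep t ih
      exact ⟨_, hs⟩
  exact fun t => hstep t (hne t)

end Strategy

section TightFunctionals

variable {V : Type} {S : Set (Conf V d)} {M m : ℕ} {N : ℤ} {ρ : ℕ → Conf V d} {r : Fin d → ℤ}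
  {τ t : ℕ}

/-- The small functionals whose slack at the current configuration lies below the threshold `N`. -/
noncomputable def tightFunctionals (m : ℕ) (N : ℤ) (c : Conf V d) : Finset (Fin d → ℤ) :=
  (smallFunctionals d m).filter (slack (cube d m) N c.2 · < N)

/-- The tight functionals at the end of the history, by seniority. -/
noncomputable def tightList (m : ℕ) (N : ℤ) (h : List (Conf V d)) : List (Fin d → ℤ) :=
  (h.map (tightFunctionals m N)).foldl reprioritize []

theorem tightList_hist (m : ℕ) (N : ℤ) (ρ : ℕ → Conf V d) (t : ℕ) :
    tightList m N (hist ρ (t + 1)) = priorityList (fun t => tightFunctionals m N (ρ t)) t := by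
  rw [tightList, hist, List.map_map, priorityList]
  rfl

/-- A bound on the slack that a small functional loses along an edge of norm at most `M`. -/
def stepLoss (d m M : ℕ) : ℕ := d * (d * m) ^ (d - 1) * M

theorem dotProduct_le_stepLoss {u : Fin d → ℤ} (hr : r ∈ smallFunctionals d m)
    (hu : vnorm u ≤ M) : r ⬝ᵥ u ≤ stepLoss d m M :=
  le_of_abs_le (abs_dotProduct_le (mem_smallFunctionals.1 hr).2 hu)

/-- A sufficient threshold for the slacks of the small functionals on `n` vertices: a functional
suffers at most as many losses as there are small functionals, each along a simple path and one
further edge, and the final one along a simple path. -/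
noncomputable def slackThreshold (n d M : ℕ) : ℕ :=
  ((smallFunctionals d (n * M)).card + 1) * ((n + 1) * stepLoss d (n * M) M)

variable [Fintype V]

theorem slack_sub_le_of_persists (hm : m = Fintype.card V * M) (hm₁ : 1 ≤ m) (hN : 0 ≤ N)
    (hρS : ∀ t, ((ρ t).1, (ρ (t + 1)).2 - (ρ t).2, (ρ (t + 1)).1) ∈
      optimalEdges S (tightList m N (hist ρ (t + 1))))
    (hρM : ∀ t, vnorm ((ρ (t + 1)).2 - (ρ t).2) ≤ M) (hτ : τ ≤ t)
    (hr : Persists (fun t => tightFunctionals m N (ρ t)) r τ t)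
    (hslack : ∀ r ∈ smallFunctionals d m, 0 ≤ slack (cube d m) N (ρ τ).2 r) :
    slack (cube d m) N (ρ τ).2 r - Fintype.card V * stepLoss d m M ≤
      slack (cube d m) N (ρ t).2 r := by
  set T := fun t => tightFunctionals m N (ρ t)
  set l := before r (priorityList T t) ++ [r]
  have hpre : ∀ t', τ ≤ t' → t' ≤ t → l <+: priorityList T t' := fun t' h h' => by
    simpa only [l, ← (hr t' h h').2] using
      before_append_isPrefix (mem_priorityList.2 (hr t' h h').1)
  have hcoherent : SignCoherent (cube d (Fintype.card V * M)) l := by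
    rw [← hm]
    exact signCoherent_of_slack_lt hN (slack_cube_nonneg hm₁ hslack) fun r hr =>
      (Finset.mem_filter.1 (mem_priorityList.1 ((hpre τ le_rfl hτ).subset hr))).2
  obtain ⟨k, rfl⟩ := Nat.exists_eq_add_of_le hτ
  obtain ⟨w, hw, hweight⟩ := exists_isWalk_of_steps
    (A := {e ∈ optimalEdges S l | vnorm e.2.1 ≤ M}) (ρ := ρ) (τ := τ) (k := k) fun t h h' =>
      ⟨optimalEdges_subset_of_isPrefix (hpre t h h'.le) (tightList_hist m N ρ t ▸ hρS t), hρM t⟩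
  have hrsmall : r ∈ smallFunctionals d m := (Finset.mem_filter.1 (hr τ le_rfl hτ).1).1
  have hdot : r ⬝ᵥ weight w ≤ Fintype.card V * stepLoss d m M :=
    hw.dotProduct_weight_le_of_signCoherent hcoherent (List.mem_append_right _ List.mem_cons_self)
      (Set.sep_subset _ _) (fun _ he => he.2) (Nat.cast_nonneg _)
      fun _ he => dotProduct_le_stepLoss hrsmall he.2
  rw [slack_sub (cube d m) N (ρ τ).2 (ρ (τ + k)).2, ← hweight]
  exact Int.sub_le_sub_left hdot _

theorem slack_nonneg_of_mem_optimalEdges (hm : m = Fintype.card V * M) (hm₁ : 1 ≤ m)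
    (hN : slackThreshold (Fintype.card V) d M ≤ N) (hzero : (ρ 0).2 = 0)
    (hρS : ∀ t, ((ρ t).1, (ρ (t + 1)).2 - (ρ t).2, (ρ (t + 1)).1) ∈
      optimalEdges S (tightList m N (hist ρ (t + 1))))
    (hρM : ∀ t, vnorm ((ρ (t + 1)).2 - (ρ t).2) ≤ M) (t : ℕ) (s : Fin d → ℤ) :
    0 ≤ slack (cube d m) N (ρ t).2 s := by
  have hN₀ : 0 ≤ N := (Nat.cast_nonneg _).trans hN
  refine slack_cube_nonneg hm₁ (nonneg_of_persists_bound
    (T := fun t => tightFunctionals m N (ρ t)) (sl := fun t => slack (cube d m) N (ρ t).2)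
    (W := Fintype.card V * stepLoss d m M) (fun t => rfl) (Nat.cast_nonneg (stepLoss d m M))
    (by positivity) ?_ ?_ ?_ ?_ t) s
  · rw [← add_one_mul, hm]
    exact_mod_cast hN
  · intro r hr
    rw [hzero]
    exact le_slack_zero hN₀
      (exists_mem_cube_dotProduct_ne_zero hm₁ (mem_smallFunctionals.1 hr).1)
  · intro t r hr
    rw [slack_sub (cube d m) N (ρ t).2 (ρ (t + 1)).2]
    exact Int.sub_le_sub_left (dotProduct_le_stepLoss hr (hρM t)) _
  · exact fun τ t r hτ hr hslack => slack_sub_le_of_persists hm hm₁ hN₀ hρS hρM hτ hr hslack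

end TightFunctionals

section HypercubeBound

variable {n M m : ℕ}

theorem pow_pred_le_pow (hm : 1 ≤ m) (d : ℕ) : (d * m) ^ (d - 1) ≤ (4 * m) ^ ((d + 1) * d) := by
  have hdm : d * m ≤ (4 * m) ^ (d + 1) := by
    rw [pow_succ]
    exact Nat.mul_le_mul (Nat.lt_pow_self (by lia)).le (by lia)
  calc (d * m) ^ (d - 1) ≤ ((4 * m) ^ (d + 1)) ^ (d - 1) := Nat.pow_le_pow_left hdm _
    _ ≤ ((4 * m) ^ (d + 1)) ^ d :=
      Nat.pow_le_pow_right (Nat.one_le_pow _ _ (by lia)) (Nat.sub_le _ _)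
    _ = (4 * m) ^ ((d + 1) * d) := (pow_mul _ _ _).symm

theorem stepLoss_le_pow (hm : 1 ≤ m) (hM : M ≤ m) (d : ℕ) :
    stepLoss d m M ≤ (4 * m) ^ (d + (d + 1) * d + 1) := by
  rw [stepLoss, pow_succ, pow_add]
  exact Nat.mul_le_mul (Nat.mul_le_mul (Nat.lt_pow_self (by lia)).le (pow_pred_le_pow hm d))
    (by lia)

theorem succ_card_smallFunctionals_le_pow (hm : 1 ≤ m) (d : ℕ) :
    (smallFunctionals d m).card + 1 ≤ (4 * m) ^ (((d + 1) * d + 1) * d + 1) := by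
  have hsucc : ∀ a e, a ≤ (4 * m) ^ e → 2 * a + 1 ≤ (4 * m) ^ (e + 1) := fun a e ha => by
    have hpow := Nat.one_le_pow e (4 * m) (by lia)
    rw [pow_succ]
    nlinarith
  have hcard : (smallFunctionals d m).card ≤ (4 * m) ^ (((d + 1) * d + 1) * d) := by
    rw [pow_mul]
    exact (card_smallFunctionals_le d m).trans
      (Nat.pow_le_pow_left (hsucc _ _ (pow_pred_le_pow hm d)) d)
  exact le_trans (by lia) (hsucc _ _ hcard)

theorem slackThreshold_mul_le_pow (hn : 1 ≤ n) (hM : 1 ≤ M) (d : ℕ) :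
    slackThreshold n d M * ((2 * (n * M) + 1) ^ d * (n * M)) ≤ (4 * n * M) ^ (2 * (d + 2) ^ 3) := by
  have hnm : n ≤ n * M := Nat.le_mul_of_pos_right _ hM
  have hMm : M ≤ n * M := Nat.le_mul_of_pos_left _ hn
  have hm : 1 ≤ n * M := hn.trans hnm
  rw [slackThreshold, mul_assoc 4]
  calc _ ≤ (4 * (n * M)) ^ (((d + 1) * d + 1) * d + 1) *
        (4 * (n * M) * (4 * (n * M)) ^ (d + (d + 1) * d + 1)) *
        ((4 * (n * M)) ^ d * (4 * (n * M))) :=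
      Nat.mul_le_mul
        (Nat.mul_le_mul (succ_card_smallFunctionals_le_pow hm d)
          (Nat.mul_le_mul (by lia) (stepLoss_le_pow hm hMm d)))
        (Nat.mul_le_mul (Nat.pow_le_pow_left (by lia) d) (by lia))
    _ = (4 * (n * M)) ^ (d ^ 3 + 2 * d ^ 2 + 4 * d + 4) := by ring
    _ ≤ (4 * (n * M)) ^ (2 * (d + 2) ^ 3) := Nat.pow_le_pow_right (by lia) (by
        nlinarith [Nat.zero_le (d ^ 2), Nat.zero_le (d ^ 3)])

end HypercubeBound

theorem IsPlay.vnorm_le {G : MWG V d} {v₀ : V} {ρ : ℕ → Conf V d} (hρ : IsPlay G v₀ ρ) (t : ℕ) :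
    vnorm (ρ t).2 ≤ t * enorm G := by
  induction t with
  | zero => simp [hρ.1, vnorm]
  | succ t ih =>
    have hstep := (vnorm_add_le (ρ t).2 _).trans (add_le_add ih (vnorm_le_enorm (hρ.2 t)))
    rwa [add_sub_cancel, ← add_one_mul] at hstep

theorem small_hypercube_property_general (G : MWG V d) (v₀ : V) (hwin : P1WinsBounding G v₀) :
    ∃ σ : Strat V d, ValidStrat G (G.P1 : Set V) σ ∧
      ∀ ρ, IsPlay G v₀ ρ → Consistent (G.P1 : Set V) σ ρ →
        ∀ n, vnorm ((ρ n).2) ≤ (4 * Fintype.card V * enorm G) ^ (2 * (d + 2) ^ 3) := by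
  set m := Fintype.card V * enorm G with hm
  set N := slackThreshold (Fintype.card V) d (enorm G) with hN
  obtain ⟨S, hS, hv₀⟩ := mem_safeVertices_of_p1WinsBounding hwin
  obtain ⟨σ, hσ, hplays⟩ := hS.exists_strat hv₀ (tightList m N)
  refine ⟨σ, hσ, fun ρ hρ hcons t => ?_⟩
  rcases Nat.eq_zero_or_pos (enorm G) with hE | hE
  · exact (hρ.vnorm_le t).trans (by rw [hE, mul_zero]; exact Nat.zero_le _)
  have hcard : 1 ≤ Fintype.card V := Fintype.card_pos_iff.2 ⟨v₀⟩
  have hslack := slack_nonneg_of_mem_optimalEdges hm (Nat.mul_pos hcard hE) (N := N)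
    (Nat.cast_le.2 hN.ge) (congrArg Prod.snd hρ.1) (hplays ρ hρ hcons)
    (fun t => vnorm_le_enorm (hρ.2 t)) t
  exact (vnorm_le_of_slack_nonneg hslack).trans (slackThreshold_mul_le_pow hcard hE d)

/-- small hypercube property, Lemma 3: if Player 1 wins the
bounding game from `v₀`, then she has a winning strategy from `v₀` which
ensures `‖ρ‖ ≤ (4|V|·‖E‖)^(2(d+2)³)` for all consistent plays `ρ` from `v₀`. -/
theorem small_hypercube_property
    (V : Type) [Fintype V] [DecidableEq V] (d : ℕ) (G : MWG V d)
    (hE : 0 < enorm G) (hcyc : EveryCycleHasP1 G) (v₀ : V)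
    (hwin : P1WinsBounding G v₀) :
    ∃ σ : Strat V d, ValidStrat G (G.P1 : Set V) σ ∧
      ∀ ρ, IsPlay G v₀ ρ → Consistent (G.P1 : Set V) σ ρ →
        ∀ n, vnorm ((ρ n).2) ≤ (4 * Fintype.card V * enorm G) ^ (2 * (d + 2)^3) :=
  small_hypercube_property_general G v₀ hwin
end

section
/- Bounding games are determined: from every vertex v₀ of every multi-weighted game graph ⟨V,E,d⟩ in which every cycle contains at least one Player-1 vertex, exactly one of the two players has a winning strategy in the bounding game Γ⟨V,E,d⟩. -/
variable {V : Type} [Fintype V] [DecidableEq V] {d : ℕ}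

/-!
The set of vertices is finite, so a play is bounded iff it visits finitely many configurations.
Call a configuration confined if Player 1 can keep the play inside some finite set containing it.
From a confined configuration Player 1 wins. For every finite set `F`, Player 2 can force the play
from a nonconfined configuration to a nonconfined one outside `F`: otherwise the nonconfined
configurations from which this fails are finitely many, and together with a finite trap around
their confined successors they form a finite trap. Player 2 therefore wins by always heading for a
nonconfined configuration that has not been visited yet.
-/

namespace BoundingGame

open Set

theorem exists_subset_of_finite_of_monotone {α : Type*} {s : Set α} {A : ℕ → Set α}
    (hs : s.Finite) (hA : Monotone A) (h : s ⊆ ⋃ n, A n) : ∃ n, s ⊆ A n := by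
  lift s to Finset α using hs
  exact hA.directed_le.exists_mem_subset_of_finset_subset_biUnion h

section Arena

variable {α : Type*} {r : α → α → Prop} {Q : Set α}

variable (r Q) in
/-- The one-step controllable predecessor of `A`: the positions from which the owner of the
positions in `Q` can make sure that the next position, reached along `r`, lies in `A`. -/
def force (A : Set α) : Set α :=
  {c | (c ∈ Q → ∃ c', r c c' ∧ c' ∈ A) ∧ (c ∉ Q → ∀ c', r c c' → c' ∈ A)}

theorem mem_force_of_successors {A B : Set α} {c : α} (hc : c ∈ force r Q A)
    (h : ∀ c', r c c' → c' ∈ A → c' ∈ B) : c ∈ force r Q B :=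
  ⟨fun hQ => (hc.1 hQ).imp fun c' hc' => ⟨hc'.1, h c' hc'.1 hc'.2⟩,
    fun hQ c' hr => h c' hr (hc.2 hQ c' hr)⟩

theorem force_mono {A B : Set α} (h : A ⊆ B) : force r Q A ⊆ force r Q B :=
  fun _ hc => mem_force_of_successors hc fun _ _ hA => h hA

theorem compl_force (A : Set α) : (force r Q A)ᶜ = force r Qᶜ Aᶜ := by
  ext c
  by_cases hQ : c ∈ Q <;> simp [force, hQ]

theorem force_iUnion_subset (hfin : ∀ c, {c' | r c c'}.Finite) {A : ℕ → Set α} (hA : Monotone A) :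
    force r Q (⋃ n, A n) ⊆ ⋃ n, force r Q (A n) := by
  intro c hc
  rw [mem_iUnion]
  by_cases hQ : c ∈ Q
  · obtain ⟨c', hr, hc'⟩ := hc.1 hQ
    obtain ⟨n, hn⟩ := mem_iUnion.1 hc'
    exact ⟨n, fun _ => ⟨c', hr, hn⟩, fun h => absurd hQ h⟩
  · obtain ⟨n, hn⟩ := exists_subset_of_finite_of_monotone (hfin c) hA (hc.2 hQ)
    exact ⟨n, fun h => absurd h hQ, fun _ => hn⟩

variable (r Q) in
/-- A trap for the owner of `Q`: a set of positions that this player cannot force the game to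
leave. -/
def IsTrap (D : Set α) : Prop :=
  Disjoint D (force r Q Dᶜ)

theorem IsTrap.union {D D' : Set α} (hD : IsTrap r Q D) (hD' : IsTrap r Q D') :
    IsTrap r Q (D ∪ D') :=
  disjoint_union_left.2
    ⟨hD.mono_right (force_mono (compl_subset_compl.2 subset_union_left)),
      hD'.mono_right (force_mono (compl_subset_compl.2 subset_union_right))⟩

theorem IsTrap.sUnion {S : Set (Set α)} (hS : ∀ D ∈ S, IsTrap r Q D) : IsTrap r Q (⋃₀ S) :=
  disjoint_sUnion_left.2 fun D hD =>
    (hS D hD).mono_right (force_mono (compl_subset_compl.2 (subset_sUnion_of_mem hD)))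

theorem IsTrap.subset_force_compl {D : Set α} (hD : IsTrap r Q D) : D ⊆ force r Qᶜ D := by
  simpa only [compl_force, compl_compl] using hD.subset_compl_right

theorem IsTrap.range_subset {D : Set α} (hD : IsTrap r Q D) {x : ℕ → α} (h0 : x 0 ∈ D)
    (hx : ∀ n, x n ∈ force r Qᶜ D → x (n + 1) ∈ D) : range x ⊆ D := by
  refine range_subset_iff.2 fun n => ?_
  induction n with
  | zero => exact h0
  | succ n ih => exact hx n (hD.subset_force_compl ih)

variable (r Q) in
/-- The positions from which the owner of `Q` can force a visit to `T` within `n` moves. -/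
def attrStage (T : Set α) : ℕ → Set α
  | 0 => T
  | n + 1 => attrStage T n ∪ force r Q (attrStage T n)

theorem attrStage_mono (T : Set α) : Monotone (attrStage r Q T) :=
  monotone_nat_of_le_succ fun _ => subset_union_left

variable (r Q) in
/-- The attractor of `T`: the positions from which the owner of `Q` can force a visit to `T` within
a number of moves fixed in advance. -/
def attractor (T : Set α) : Set α :=
  ⋃ n, attrStage r Q T n

theorem attrStage_subset_attractor (T : Set α) (n : ℕ) : attrStage r Q T n ⊆ attractor r Q T :=
  subset_iUnion (attrStage r Q T) n

theorem isTrap_compl_attractor (hfin : ∀ c, {c' | r c c'}.Finite) (T : Set α) :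
    IsTrap r Q (attractor r Q T)ᶜ := by
  have hclosed : force r Q (attractor r Q T) ⊆ attractor r Q T :=
    (force_iUnion_subset hfin (attrStage_mono T)).trans <| iUnion_subset fun n =>
      subset_union_right.trans (attrStage_subset_attractor T (n + 1))
  rw [IsTrap, compl_compl]
  exact disjoint_compl_left_iff_subset.2 hclosed

theorem IsTrap.disjoint_attractor {D T : Set α} (hD : IsTrap r Q D) (hDT : Disjoint D T) :
    Disjoint D (attractor r Q T) := by
  refine disjoint_iUnion_right.2 fun n => ?_
  induction n with
  | zero => exact hDT
  | succ n ih => exact disjoint_union_right.2 ⟨ih, hD.mono_right (force_mono ih.subset_compl_left)⟩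

variable (r Q) in
/-- The positions that are strictly closer to `T` than `c` is, for the number of moves within which
the owner of `Q` can force a visit to `T`. -/
def progress (T : Set α) (c : α) : Set α :=
  {c' | ∃ n, c ∉ attrStage r Q T n ∧ c' ∈ attrStage r Q T n}

theorem progress_subset_attractor (T : Set α) (c : α) : progress r Q T c ⊆ attractor r Q T :=
  fun _ ⟨n, _, hn⟩ => attrStage_subset_attractor T n hn

theorem mem_force_progress {T : Set α} {c : α} (hc : c ∈ attractor r Q T) (hcT : c ∉ T) :
    c ∈ force r Q (progress r Q T c) := by
  obtain ⟨n, hn⟩ := mem_iUnion.1 hc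
  induction n with
  | zero => exact absurd hn hcT
  | succ n ih =>
    by_cases hcn : c ∈ attrStage r Q T n
    · exact ih hcn
    · exact mem_force_of_successors (hn.resolve_left hcn) fun c' _ hc' => ⟨n, hcn, hc'⟩

theorem exists_notMem_progress (T : Set α) (x : ℕ → α) :
    ∃ n, x (n + 1) ∉ progress r Q T (x n) := by
  by_contra! hx
  have hstage : ∀ k n, x n ∉ attrStage r Q T k := by
    intro k
    induction k with
    | zero =>
      intro n hn
      obtain ⟨j, hj, -⟩ := hx n
      exact hj (attrStage_mono T j.zero_le hn)
    | succ k ih =>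
      intro n hn
      obtain ⟨j, hj, hj'⟩ := hx n
      have hjk : j < k + 1 := not_le.1 fun h => hj (attrStage_mono T h hn)
      exact ih (n + 1) (attrStage_mono T (Nat.lt_succ_iff.1 hjk) hj')
  obtain ⟨k, -, hk⟩ := hx 0
  exact hstage k 1 hk

variable (r Q) in
/-- The positions from which the opponent of the owner of `Q` can confine the game to finitely many
positions. -/
def confined : Set α :=
  ⋃₀ {D | D.Finite ∧ IsTrap r Q D}

theorem isTrap_confined : IsTrap r Q (confined r Q) :=
  IsTrap.sUnion fun _ hD => hD.2

theorem exists_finite_isTrap_superset {E : Set α} (hE : E.Finite) (hEc : E ⊆ confined r Q) :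
    ∃ D, (D.Finite ∧ IsTrap r Q D) ∧ E ⊆ D :=
  have hdir : DirectedOn (· ⊆ ·) {D | D.Finite ∧ IsTrap r Q D} := fun D hD D' hD' =>
    ⟨D ∪ D', ⟨hD.1.union hD'.1, hD.2.union hD'.2⟩, subset_union_left, subset_union_right⟩
  have hne : {D | D.Finite ∧ IsTrap r Q D}.Nonempty := ⟨∅, finite_empty, empty_disjoint _⟩
  hdir.exists_mem_subset_of_finite_of_subset_sUnion hne hE hEc

theorem compl_confined_subset_attractor (hfin : ∀ c, {c' | r c c'}.Finite) {F : Set α}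
    (hF : F.Finite) : (confined r Q)ᶜ ⊆ attractor r Q (confined r Q ∪ F)ᶜ := by
  set A := attractor r Q (confined r Q ∪ F)ᶜ
  let X := (confined r Q)ᶜ \ A
  have hX : X.Finite := hF.subset fun c hc =>
    (not_notMem.1 fun hcF => hc.2 (attrStage_subset_attractor _ 0 hcF)).resolve_left hc.1
  let E := (⋃ c ∈ X, {c' | r c c'}) ∩ confined r Q
  have hE : E.Finite := (hX.biUnion fun c _ => hfin c).inter_of_left _
  obtain ⟨D, ⟨hDfin, hDtrap⟩, hED⟩ := exists_finite_isTrap_superset hE inter_subset_right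
  have hXD : IsTrap r Q (X ∪ D) := by
    refine disjoint_union_left.2 ⟨disjoint_left.2 fun c hcX hc => ?_,
      hDtrap.mono_right (force_mono (compl_subset_compl.2 subset_union_right))⟩
    refine disjoint_left.1 (isTrap_compl_attractor hfin _) hcX.2
      (mem_force_of_successors hc fun c' hr hc' => ?_)
    have hc'conf : c' ∉ confined r Q := fun h =>
      hc' (Or.inr (hED ⟨mem_biUnion hcX hr, h⟩))
    rw [compl_compl]
    exact not_not.1 fun h => hc' (Or.inl ⟨hc'conf, h⟩)
  intro c hc
  by_contra hcA
  exact hc ⟨X ∪ D, ⟨hX.union hDfin, hXD⟩, Or.inl ⟨hc, hcA⟩⟩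

/-- A sequence with finite range eventually makes no new visits; from then on the set to be reached
stays the same, and progress towards a fixed set cannot go on forever. -/
theorem infinite_range_of_mem_progress {C : Set α} {x : ℕ → α}
    (hx : ∀ n, x (n + 1) ∈ progress r Q (C ∪ x '' Iic n)ᶜ (x n)) : (range x).Infinite := by
  intro hfin
  have hmono : Monotone fun n => x '' Iic n := fun _ _ h => image_mono (Iic_subset_Iic.2 h)
  obtain ⟨N, hN⟩ : ∃ N, range x ⊆ x '' Iic N :=
    exists_subset_of_finite_of_monotone hfin hmono <|
      range_subset_iff.2 fun n => mem_iUnion.2 ⟨n, n, self_mem_Iic, rfl⟩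
  have hconst : ∀ n, x '' Iic (N + n) = x '' Iic N := fun n =>
    ((image_subset_range _ _).trans hN).antisymm (hmono (N.le_add_right n))
  obtain ⟨n, hn⟩ := exists_notMem_progress (r := r) (Q := Q) (C ∪ x '' Iic N)ᶜ fun n => x (N + n)
  exact hn (hconst n ▸ hx (N + n))

theorem infinite_range_of_notMem_confined (hfin : ∀ c, {c' | r c c'}.Finite) {x : ℕ → α}
    (h0 : x 0 ∉ confined r Q)
    (hx : ∀ n, x n ∈ force r Q (progress r Q (confined r Q ∪ x '' Iic n)ᶜ (x n)) →
      x (n + 1) ∈ progress r Q (confined r Q ∪ x '' Iic n)ᶜ (x n)) :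
    (range x).Infinite := by
  have hstep : ∀ n, x n ∉ confined r Q →
      x (n + 1) ∈ progress r Q (confined r Q ∪ x '' Iic n)ᶜ (x n) := fun n hn =>
    hx n <| mem_force_progress
      (compl_confined_subset_attractor hfin ((finite_Iic n).image x) hn)
      (not_not.2 (Or.inr ⟨n, self_mem_Iic, rfl⟩))
  have hconf : ∀ n, x n ∉ confined r Q := by
    intro n
    induction n with
    | zero => exact h0
    | succ n ih =>
      have hdisj : Disjoint (confined r Q) (attractor r Q (confined r Q ∪ x '' Iic n)ᶜ) :=
        isTrap_confined.disjoint_attractor (disjoint_compl_right.mono_left subset_union_left)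
      exact disjoint_right.1 hdisj (progress_subset_attractor _ _ (hstep n ih))
  exact infinite_range_of_mem_progress fun n => hstep n (hconf n)

end Arena

theorem finite_setOf_vnorm_le (B : ℕ) : {u : Fin d → ℤ | vnorm u ≤ B}.Finite := by
  refine (finite_Icc (fun _ => -(B : ℤ)) fun _ => (B : ℤ)).subset fun u hu => ?_
  have hcoord : ∀ i, |u i| ≤ B := fun i => by
    rw [Int.abs_eq_natAbs, Nat.cast_le]
    exact (Finset.le_sup (f := fun j => (u j).natAbs) (Finset.mem_univ i)).trans hu
  exact ⟨fun i => (abs_le.1 (hcoord i)).1, fun i => (abs_le.1 (hcoord i)).2⟩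

omit [Fintype V] [DecidableEq V] in
theorem boundedPlay_iff_finite_range [Finite V] {ρ : ℕ → Conf V d} :
    BoundedPlay ρ ↔ (range ρ).Finite := by
  constructor
  · rintro ⟨B, hB⟩
    exact (finite_univ.prod (finite_setOf_vnorm_le B)).subset <|
      range_subset_iff.2 fun n => ⟨mem_univ _, hB n⟩
  · intro hfin
    obtain ⟨B, hB⟩ := (hfin.image fun c => vnorm c.2).bddAbove
    exact ⟨B, fun n => hB ⟨ρ n, mem_range_self n, rfl⟩⟩

theorem finite_setOf_step (G : MWG V d) (c : Conf V d) : {c' | Step G c c'}.Finite :=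
  (G.finE.image fun e => (e.2.2, c.2 + e.2.1)).subset fun _ h =>
    ⟨_, h, Prod.ext rfl (add_sub_cancel _ _)⟩

theorem exists_step (G : MWG V d) (c : Conf V d) : ∃ c', Step G c c' := by
  obtain ⟨u, v, h⟩ := G.serial c.1
  exact ⟨(v, c.2 + u), by rwa [Step, add_sub_cancel_left]⟩

omit [Fintype V] [DecidableEq V] in
theorem setOf_mem_hist_append (ρ : ℕ → Conf V d) (n : ℕ) :
    {c | c ∈ hist ρ n ++ [ρ n]} = ρ '' Iic n := by
  ext c
  simp [hist, le_iff_lt_or_eq, or_and_right, exists_or, eq_comm]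

/-- The winning strategy moves into the current target set whenever there is an edge leading
there. -/
theorem wins_of_targets {G : MWG V d} {P : Set V} {Win : (ℕ → Conf V d) → Prop} {v : V}
    (target : List (Conf V d) → Conf V d → Set (Conf V d))
    (hWin : ∀ ρ, IsPlay G v ρ →
      (∀ n, ρ n ∈ force (Step G) (Prod.fst ⁻¹' P) (target (hist ρ n) (ρ n)) →
        ρ (n + 1) ∈ target (hist ρ n) (ρ n)) → Win ρ) :
    Wins G P Win v := by
  have hmove : ∀ h c, ∃ c', Step G c c' ∧
      ((∃ c'', Step G c c'' ∧ c'' ∈ target h c) → c' ∈ target h c) := fun h c => by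
    by_cases htarget : ∃ c'', Step G c c'' ∧ c'' ∈ target h c
    · exact htarget.imp fun c' hc' => ⟨hc'.1, fun _ => hc'.2⟩
    · exact (exists_step G c).imp fun c' hc' => ⟨hc', fun h => absurd h htarget⟩
  choose next hnext hnext_mem using hmove
  refine ⟨fun h c => ((next h c).2 - c.2, (next h c).1), fun h c _ _ => hnext h c, ?_⟩
  intro ρ hρ hcons
  refine hWin ρ hρ fun n hn => ?_
  by_cases hP : (ρ n).1 ∈ P
  · have hρnext : ρ (n + 1) = next (hist ρ n) (ρ n) := by
      simpa only [add_sub_cancel] using hcons n hP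
    exact hρnext ▸ hnext_mem _ _ (hn.1 hP)
  · exact hn.2 hP _ (hρ.2 n)

/-- The configurations at which Player 2 has to move. -/
abbrev player2Confs (G : MWG V d) : Set (Conf V d) := {c | c.1 ∉ G.P1}

theorem p1WinsBounding_of_mem_confined {G : MWG V d} {v : V}
    (h : (v, 0) ∈ confined (Step G) (player2Confs G)) : P1WinsBounding G v := by
  obtain ⟨D, ⟨hDfin, hDtrap⟩, hvD⟩ := h
  refine wins_of_targets (fun _ _ => D) fun ρ hρ hforce => ?_
  have hcompl : Prod.fst ⁻¹' (G.P1 : Set V) = (player2Confs G)ᶜ := (compl_compl _).symm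
  rw [hcompl] at hforce
  have hrange : range ρ ⊆ D := hDtrap.range_subset (hρ.1 ▸ hvD) hforce
  exact boundedPlay_iff_finite_range.2 (hDfin.subset hrange)

theorem p2WinsBounding_of_notMem_confined {G : MWG V d} {v : V}
    (h : (v, 0) ∉ confined (Step G) (player2Confs G)) : P2WinsBounding G v := by
  let Q := player2Confs G
  refine wins_of_targets
    (fun h c => progress (Step G) Q (confined (Step G) Q ∪ {c' | c' ∈ h ++ [c]})ᶜ c) ?_
  intro ρ hρ hforce
  simp only [setOf_mem_hist_append] at hforce
  rw [boundedPlay_iff_finite_range]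
  exact infinite_range_of_notMem_confined (finite_setOf_step G) (hρ.1 ▸ h) hforce

omit [Fintype V] [DecidableEq V] in
theorem exists_consistent_univ (μ : Strat V d) (c : Conf V d) :
    ∃ ρ : ℕ → Conf V d, ρ 0 = c ∧ Consistent univ μ ρ := by
  let extend (s : List (Conf V d) × Conf V d) : List (Conf V d) × Conf V d :=
    (s.1 ++ [s.2], ((μ s.1 s.2).2, s.2.2 + (μ s.1 s.2).1))
  let ρ n := (extend^[n] ([], c)).2
  have hhist : ∀ n, (extend^[n] ([], c)).1 = hist ρ n := by
    intro n
    induction n with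
    | zero => rfl
    | succ n ih =>
      rw [Function.iterate_succ_apply', hist, List.range_succ, List.map_append]
      exact congrArg (· ++ [ρ n]) ih
  refine ⟨ρ, rfl, fun n _ => ?_⟩
  rw [← hhist n]
  exact congrArg Prod.snd (Function.iterate_succ_apply' extend n ([], c))

theorem isPathL_hist_append {G : MWG V d} {ρ : ℕ → Conf V d} {n : ℕ}
    (h : ∀ m < n, Step G (ρ m) (ρ (m + 1))) : IsPathL G (hist ρ n ++ [ρ n]) := by
  have hhist : hist ρ n ++ [ρ n] = (List.range (n + 1)).map ρ := by
    rw [List.range_succ, List.map_append, List.map_singleton, hist]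
  rw [hhist]
  exact (List.isChain_map ρ).2 ((List.isChain_range_succ _ n).2 h)

theorem isPlay_of_consistent_univ {G : MWG V d} {μ : Strat V d} (hμ : ValidStrat G univ μ) {v : V}
    {ρ : ℕ → Conf V d} (h0 : ρ 0 = (v, 0)) (hρ : Consistent univ μ ρ) : IsPlay G v ρ := by
  refine ⟨h0, fun n => ?_⟩
  induction n using Nat.strong_induction_on with
  | _ n ih =>
    rw [hρ n (mem_univ _), Step, add_sub_cancel_left]
    exact hμ _ _ (isPathL_hist_append ih) (mem_univ _)

theorem exists_isPlay_consistent {G : MWG V d} {P : Set V} {σ τ : Strat V d}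
    (hσ : ValidStrat G P σ) (hτ : ValidStrat G Pᶜ τ) (v : V) :
    ∃ ρ, IsPlay G v ρ ∧ Consistent P σ ρ ∧ Consistent Pᶜ τ ρ := by
  classical
  let μ : Strat V d := fun h c => if c.1 ∈ P then σ h c else τ h c
  have hμσ : ∀ h c, c.1 ∈ P → μ h c = σ h c := fun _ _ hP => if_pos hP
  have hμτ : ∀ h c, c.1 ∉ P → μ h c = τ h c := fun _ _ hP => if_neg hP
  have hμ : ValidStrat G univ μ := fun h c hpath _ => by
    by_cases hP : c.1 ∈ P
    · exact hμσ h c hP ▸ hσ h c hpath hP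
    · exact hμτ h c hP ▸ hτ h c hpath hP
  obtain ⟨ρ, h0, hρ⟩ := exists_consistent_univ μ (v, 0)
  exact ⟨ρ, isPlay_of_consistent_univ hμ h0 hρ,
    fun n hP => hμσ _ _ hP ▸ hρ n (mem_univ _), fun n hP => hμτ _ _ hP ▸ hρ n (mem_univ _)⟩

theorem Wins.not_wins_compl {G : MWG V d} {P : Set V} {Win : (ℕ → Conf V d) → Prop} {v : V}
    (h : Wins G P Win v) : ¬ Wins G Pᶜ (fun ρ => ¬ Win ρ) v := by
  rintro ⟨τ, hτ, hτwin⟩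
  obtain ⟨σ, hσ, hσwin⟩ := h
  obtain ⟨ρ, hρ, hρσ, hρτ⟩ := exists_isPlay_consistent hσ hτ v
  exact hτwin ρ hρ hρτ (hσwin ρ hρ hρσ)

end BoundingGame

open BoundingGame in
theorem bounding_game_determined_general (G : MWG V d) (v₀ : V) :
    Xor' (P1WinsBounding G v₀) (P2WinsBounding G v₀) := by
  refine (xor_iff_or_and_not_and _ _).2 ⟨?_, fun h => Wins.not_wins_compl h.1 h.2⟩
  by_cases h : (v₀, 0) ∈ confined (Step G) (player2Confs G)
  · exact Or.inl (p1WinsBounding_of_mem_confined h)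
  · exact Or.inr (p2WinsBounding_of_notMem_confined h)

/-- determinacy of bounding games: from every vertex of every
multi-weighted game graph in which every cycle contains at least one Player-1
vertex, exactly one of the two players has a winning strategy in the bounding
game. -/
theorem bounding_game_determined
    (V : Type) [Fintype V] [DecidableEq V] (d : ℕ) (G : MWG V d)
    (hcyc : EveryCycleHasP1 G) (v₀ : V) :
    Xor' (P1WinsBounding G v₀) (P2WinsBounding G v₀) :=
  bounding_game_determined_general G v₀
end
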